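/- There is an absolute constant c > 0 such that for all integers d, k ≥ 1 and all α ∈ (0,1), β ∈ (0, 1/e], there exists a (3, 5α)-accurate (m₁, 1−2kβ, L₁)-stable list decoder for the class kmix_k(G_d) of k-mixtures of d-dimensional Gaussian measures, where m = ⌈c·d·log(1/β)⌉, L = ⌈(d·log(1/β))^{c·d²·log(d/α)}⌉, m₁ = ⌈(2mk + 8k·log(1/β))/α⌉, and L₁ = (L·k/α)^k · (10·e·k·log(1/β)/α)^{mk}. -/

import Mathlib

open MeasureTheory ProbabilityTheory Matrix

/-- Total variation distance between two measures. -/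
noncomputable def tvDist {X : Type*} [MeasurableSpace X] (μ ν : Measure X) : ℝ :=
  ⨆ E : {E : Set X // MeasurableSet E}, |(μ E.1).toReal - (ν E.1).toReal|

/-- Total variation distance from a measure to a family of measures. -/
noncomputable def tvDistSet {X : Type*} [MeasurableSpace X] (g : Measure X)
    (F : Set (Measure X)) : ℝ :=
  ⨅ f : F, tvDist g f.1

/-- A `(C, α)`-accurate `(m, ρ, L)`-stable list decoder for `F`. -/
def IsStableListDecoder {X : Type*} [MeasurableSpace X] (F : Set (Measure X))
    (C α : ℝ) (m : ℕ) (ρ : ℝ) (L : ℝ)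
    (A : (Fin m → X) → Set (Measure X)) : Prop :=
  (∀ S, (A S).Finite ∧ ((A S).ncard : ℝ) ≤ L ∧ ∀ μ ∈ A S, IsProbabilityMeasure μ) ∧
  (∀ g : Measure X, IsProbabilityMeasure g →
    ∃ gt : Measure X, IsProbabilityMeasure gt ∧
      MeasurableSet {S : Fin m → X | gt ∈ A S} ∧
      ENNReal.ofReal ρ ≤ Measure.pi (fun _ : Fin m => g) {S | gt ∈ A S} ∧
      tvDist gt g ≤ α + C * tvDistSet g F)

instance {X : Type*} [MeasurableSpace X] : MeasurableSpace (ProbabilityMeasure X) :=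
  inferInstanceAs (MeasurableSpace {μ : Measure X // IsProbabilityMeasure μ})

/-- `(ε, δ)`-differential privacy of a kernel on datasets of size `n`. -/
def IsDPKernel {X Y : Type*} [MeasurableSpace X] [MeasurableSpace Y] {n : ℕ}
    (M : Kernel (Fin n → X) Y) (ε δ : ℝ) : Prop :=
  ∀ D D' : Fin n → X, (∃ i, D i ≠ D' i ∧ ∀ j, j ≠ i → D j = D' j) →
    ∀ E : Set Y, MeasurableSet E →
      M D E ≤ ENNReal.ofReal (Real.exp ε) * M D' E + ENNReal.ofReal δ

/-- `F` is `(ε,δ)`-privately `C`-agnostic `(n,α,β)`-learnable. -/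
def PrivAgnosticLearnable {X : Type*} [MeasurableSpace X] (F : Set (Measure X))
    (ε δ C : ℝ) (n : ℕ) (α β : ℝ) : Prop :=
  ∃ M : Kernel (Fin n → X) (ProbabilityMeasure X), IsMarkovKernel M ∧ IsDPKernel M ε δ ∧
    ∀ g : Measure X, IsProbabilityMeasure g →
      ENNReal.ofReal (1 - β) ≤
        ∫⁻ S, M S {f : ProbabilityMeasure X | tvDist (f : Measure X) g ≤ C * tvDistSet g F + α}
          ∂(Measure.pi fun _ : Fin n => g)

/-- The class of `k`-mixtures of `F`. -/
noncomputable def kmix {X : Type*} [MeasurableSpace X] (k : ℕ) (F : Set (Measure X)) :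
    Set (Measure X) :=
  {ν | ∃ (w : Fin k → ℝ) (f : Fin k → Measure X),
    (∀ i, 0 ≤ w i) ∧ (∑ i, w i = 1) ∧ (∀ i, f i ∈ F) ∧
    ν = ∑ i, ENNReal.ofReal (w i) • f i}

/-- Density of the `d`-dimensional Gaussian with mean `μ` and covariance `S`. -/
noncomputable def gaussianPdf (d : ℕ) (μ : Fin d → ℝ) (S : Matrix (Fin d) (Fin d) ℝ)
    (x : Fin d → ℝ) : ℝ :=
  (Real.sqrt ((2 * Real.pi) ^ d * S.det))⁻¹ *
    Real.exp (-(1 / 2) * ((x - μ) ⬝ᵥ (S⁻¹ *ᵥ (x - μ))))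

/-- The family of `d`-dimensional Gaussian measures. -/
noncomputable def Gd (d : ℕ) : Set (Measure (Fin d → ℝ)) :=
  {ν | ∃ (μ : Fin d → ℝ) (S : Matrix (Fin d) (Fin d) ℝ), S.PosDef ∧
    ν = volume.withDensity fun x => ENNReal.ofReal (gaussianPdf d μ S x)}

/-!
A Gaussian is known once an affine map `x ↦ B x + b` whitening it is known, and this map is read
off from the images of `d + 1` affinely independent points. Suppose that these images span a
simplex of volume bounded below inside a bounded cube. Then perturbing the map slightly moves
them through a set of large volume, while the Gaussian moves little in total variation. Comparing
volumes, only few pairwise separated Gaussians can place the same `d + 1` points in this way.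

If the sampled measure `g` gives mass at least `q` to every set heavy for one of these Gaussians,
then reading the sample point by point and keeping each point which makes the simplex lose at
most a constant factor yields such a placement with overwhelming probability. So the members of a
fixed net of Gaussians that are placed in this way by some `d + 1` sample points form a short
list, which probably contains an approximation of that Gaussian. The components of a mixture
close to `g` are of this kind, with `q` a quarter of their weight, except for some of total
weight at most twice the distance from `g`. Mixing the listed candidates with rounded weights
gives the decoder.
-/

section TotalVariation

variable {X : Type*} [MeasurableSpace X] {μ ν : Measure X}

lemma tvDist_le {a : ℝ} (h : ∀ E, MeasurableSet E → |μ.real E - ν.real E| ≤ a) :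
    tvDist μ ν ≤ a :=
  haveI : Nonempty {E : Set X // MeasurableSet E} := ⟨⟨∅, .empty⟩⟩
  ciSup_le fun E => h E.1 E.2

lemma tvDist_nonneg (μ ν : Measure X) : 0 ≤ tvDist μ ν :=
  Real.iSup_nonneg fun _ => abs_nonneg _

lemma tvDist_comm (μ ν : Measure X) : tvDist μ ν = tvDist ν μ := by
  simp only [tvDist, abs_sub_comm]

@[simp]
lemma tvDist_self (μ : Measure X) : tvDist μ μ = 0 :=
  le_antisymm (tvDist_le fun E _ => by simp) (tvDist_nonneg _ _)

lemma abs_measureReal_sub_le_one [IsProbabilityMeasure μ] [IsProbabilityMeasure ν] (E : Set X) :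
    |μ.real E - ν.real E| ≤ 1 :=
  abs_sub_le_of_nonneg_of_le measureReal_nonneg measureReal_le_one measureReal_nonneg
    measureReal_le_one

lemma tvDist_le_one (μ ν : Measure X) [IsProbabilityMeasure μ] [IsProbabilityMeasure ν] :
    tvDist μ ν ≤ 1 :=
  tvDist_le fun E _ => abs_measureReal_sub_le_one E

lemma abs_measureReal_sub_le_tvDist (μ ν : Measure X) [IsProbabilityMeasure μ]
    [IsProbabilityMeasure ν] {E : Set X} (hE : MeasurableSet E) :
    |μ.real E - ν.real E| ≤ tvDist μ ν :=
  le_ciSup (f := fun E : {E : Set X // MeasurableSet E} => |μ.real E.1 - ν.real E.1|)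
    ⟨1, Set.forall_mem_range.2 fun E => abs_measureReal_sub_le_one E.1⟩ ⟨E, hE⟩

lemma tvDist_triangle (μ ν ρ : Measure X) [IsProbabilityMeasure μ] [IsProbabilityMeasure ν]
    [IsProbabilityMeasure ρ] : tvDist μ ρ ≤ tvDist μ ν + tvDist ν ρ :=
  tvDist_le fun E hE => (abs_sub_le _ (ν.real E) _).trans <|
    add_le_add (abs_measureReal_sub_le_tvDist μ ν hE) (abs_measureReal_sub_le_tvDist ν ρ hE)

lemma tvDist_le_of_le_smul [IsProbabilityMeasure μ] [IsProbabilityMeasure ν] {K : ℝ} (hK : 0 ≤ K)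
    (h : μ ≤ ENNReal.ofReal K • ν) : tvDist μ ν ≤ K - 1 := by
  have hreal (E : Set X) : μ.real E ≤ K * ν.real E := by
    have hE := ENNReal.toReal_mono
      (ENNReal.mul_ne_top ENNReal.ofReal_ne_top (measure_ne_top ν E)) (h E)
    rwa [ENNReal.toReal_mul, ENNReal.toReal_ofReal hK] at hE
  have hK1 : 1 ≤ K := by simpa using hreal Set.univ
  refine tvDist_le fun E hE => ?_
  have hEc := hreal Eᶜ
  rw [probReal_compl_eq_one_sub hE, probReal_compl_eq_one_sub hE] at hEc
  rw [abs_le]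
  constructor <;> nlinarith [hreal E, measureReal_nonneg (μ := ν) (s := E),
    measureReal_le_one (μ := ν) (s := E)]

end TotalVariation

section WhitenedGaussian

lemma pi_withDensity_ofReal {ι : Type*} [Fintype ι] {X : ι → Type*} [∀ i, MeasurableSpace (X i)]
    (μ : ∀ i, Measure (X i)) [∀ i, SigmaFinite (μ i)] {f : ∀ i, X i → ℝ}
    (hf : ∀ i, Integrable (f i) (μ i)) (hf₀ : ∀ i x, 0 ≤ f i x) :
    Measure.pi (fun i => (μ i).withDensity fun x => ENNReal.ofReal (f i x)) =
      (Measure.pi μ).withDensity fun x => ENNReal.ofReal (∏ i, f i (x i)) := by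
  have (i : ι) : IsFiniteMeasure ((μ i).withDensity fun x => ENNReal.ofReal (f i x)) :=
    isFiniteMeasure_withDensity_ofReal (hf i).2
  refine Measure.pi_eq fun s hs => ?_
  have hs' := MeasurableSet.univ_pi hs
  have hprod₀ (x : ∀ i, X i) : 0 ≤ ∏ i, f i (x i) :=
    Finset.prod_nonneg fun i _ => hf₀ i _
  rw [withDensity_apply _ hs', ← ofReal_integral_eq_lintegral_ofReal
    (Integrable.fintype_prod_dep hf).integrableOn (Filter.Eventually.of_forall hprod₀),
    Measure.restrict_pi_pi, integral_fintype_prod_eq_prod f,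
    ENNReal.ofReal_prod_of_nonneg fun i _ => integral_nonneg (hf₀ i)]
  exact Finset.prod_congr rfl fun i _ => by
    rw [withDensity_apply _ (hs i), ofReal_integral_eq_lintegral_ofReal (hf i).integrableOn
      (Filter.Eventually.of_forall (hf₀ i))]

variable {ι : Type*} [Fintype ι]

/-- Density of the standard Gaussian on `ι → ℝ`. -/
noncomputable def stdGaussianDensity (z : ι → ℝ) : ℝ :=
  (√(2 * Real.pi))⁻¹ ^ Fintype.card ι * Real.exp (-(1 / 2) * (z ⬝ᵥ z))

/-- Standard Gaussian measure on `ι → ℝ`. -/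
noncomputable def stdGaussianPi (ι : Type*) [Fintype ι] : Measure (ι → ℝ) :=
  Measure.pi fun _ => gaussianReal 0 1

instance : IsProbabilityMeasure (stdGaussianPi ι) := by
  unfold stdGaussianPi
  infer_instance

lemma continuous_stdGaussianDensity : Continuous (stdGaussianDensity (ι := ι)) := by
  unfold stdGaussianDensity
  fun_prop

lemma prod_gaussianPDFReal_eq_stdGaussianDensity (z : ι → ℝ) :
    ∏ i, gaussianPDFReal 0 1 (z i) = stdGaussianDensity z := by
  simp only [gaussianPDFReal, stdGaussianDensity, dotProduct, Finset.prod_mul_distrib,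
    ← Real.exp_sum, NNReal.coe_one, mul_one, sub_zero, Finset.prod_const, Finset.card_univ,
    Finset.mul_sum]
  congr! 3
  ring

lemma stdGaussianPi_eq_withDensity :
    stdGaussianPi ι = volume.withDensity fun z => ENNReal.ofReal (stdGaussianDensity z) := by
  simp only [← prod_gaussianPDFReal_eq_stdGaussianDensity, volume_pi, stdGaussianPi,
    gaussianReal_of_var_ne_zero 0 one_ne_zero, gaussianPDF_def]
  exact pi_withDensity_ofReal _ (fun _ => integrable_gaussianPDFReal 0 1)
    fun _ => gaussianPDFReal_nonneg 0 1

lemma measurable_mulVec_add (B : Matrix ι ι ℝ) (b : ι → ℝ) :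
    Measurable fun x : ι → ℝ => B *ᵥ x + b :=
  (by fun_prop : Continuous fun x : ι → ℝ => B *ᵥ x + b).measurable

open scoped MatrixOrder in
lemma exists_eq_transpose_mul_self_of_posSemidef {A : Matrix ι ι ℝ} (hA : A.PosSemidef) :
    ∃ B : Matrix ι ι ℝ, A = Bᵀ * B := by
  classical
  obtain ⟨B, hB⟩ := CStarAlgebra.nonneg_iff_eq_star_mul_self.mp hA.nonneg
  exact ⟨B, by rwa [Matrix.star_eq_conjTranspose,
    Matrix.conjTranspose_eq_transpose_of_trivial] at hB⟩

variable [DecidableEq ι]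

/-- The Gaussian measure that the affine map `x ↦ B x + b` transports to the standard Gaussian;
for invertible `B` it is `N(-B⁻¹ b, (Bᵀ B)⁻¹)`. -/
noncomputable def whitenedGaussian (B : Matrix ι ι ℝ) (b : ι → ℝ) : Measure (ι → ℝ) :=
  volume.withDensity fun x => ENNReal.ofReal (|B.det| * stdGaussianDensity (B *ᵥ x + b))

variable {B B' : Matrix ι ι ℝ} {b b' : ι → ℝ}

lemma map_mulVec_add_volume (hB : B.det ≠ 0) (b : ι → ℝ) :
    (volume : Measure (ι → ℝ)).map (fun x => B *ᵥ x + b) =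
      ENNReal.ofReal |B.det⁻¹| • volume := by
  have hcomp : (fun x : ι → ℝ => B *ᵥ x + b) = (fun y => y + b) ∘ Matrix.toLin' B := by
    ext x; simp
  rw [hcomp, ← Measure.map_map (measurable_add_const b)
    (LinearMap.continuous_of_finiteDimensional _).measurable,
    Real.map_matrix_volume_pi_eq_smul_volume_pi hB, Measure.map_smul, map_add_right_eq_self]

lemma map_whitenedGaussian (hB : B.det ≠ 0) (b : ι → ℝ) :
    (whitenedGaussian B b).map (fun x => B *ᵥ x + b) = stdGaussianPi ι := by
  have hmeas := measurable_mulVec_add B b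
  have hdens : Measurable fun z : ι → ℝ => ENNReal.ofReal (stdGaussianDensity z) :=
    continuous_stdGaussianDensity.measurable.ennreal_ofReal
  ext E hE
  rw [Measure.map_apply hmeas hE, whitenedGaussian, withDensity_apply _ (hmeas hE),
    stdGaussianPi_eq_withDensity, withDensity_apply _ hE]
  simp_rw [ENNReal.ofReal_mul (abs_nonneg B.det)]
  rw [← setLIntegral_map hE (hdens.const_mul _) hmeas, map_mulVec_add_volume hB,
    Measure.restrict_smul, lintegral_smul_measure, lintegral_const_mul _ hdens, smul_eq_mul,
    ← mul_assoc, ← ENNReal.ofReal_mul (abs_nonneg _), ← abs_mul, inv_mul_cancel₀ hB, abs_one,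
    ENNReal.ofReal_one, one_mul]

lemma isProbabilityMeasure_whitenedGaussian (hB : B.det ≠ 0) (b : ι → ℝ) :
    IsProbabilityMeasure (whitenedGaussian B b) := by
  have : IsProbabilityMeasure ((whitenedGaussian B b).map (fun x => B *ᵥ x + b)) := by
    rw [map_whitenedGaussian hB]
    infer_instance
  exact Measure.isProbabilityMeasure_of_map (fun x => B *ᵥ x + b)

lemma whitenedGaussian_le_smul {K : ℝ} (hK : 0 ≤ K)
    (h : ∀ x, |B.det| * stdGaussianDensity (B *ᵥ x + b) ≤
      K * (|B'.det| * stdGaussianDensity (B' *ᵥ x + b'))) :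
    whitenedGaussian B b ≤ ENNReal.ofReal K • whitenedGaussian B' b' := by
  rw [whitenedGaussian, whitenedGaussian, ← withDensity_smul' _ _ ENNReal.ofReal_ne_top]
  refine withDensity_mono (Filter.Eventually.of_forall fun x => ?_)
  rw [Pi.smul_apply, smul_eq_mul, ← ENNReal.ofReal_mul hK]
  exact ENNReal.ofReal_le_ofReal (h x)

lemma exists_eq_whitenedGaussian {d : ℕ} {P : Measure (Fin d → ℝ)} (hP : P ∈ Gd d) :
    ∃ (B : Matrix (Fin d) (Fin d) ℝ) (b : Fin d → ℝ), B.det ≠ 0 ∧ P = whitenedGaussian B b := by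
  obtain ⟨μ, S, hS, rfl⟩ := hP
  obtain ⟨B, hB⟩ := exists_eq_transpose_mul_self_of_posSemidef hS.inv.posSemidef
  have hdet : S.det⁻¹ = B.det ^ 2 := by
    rw [← Ring.inverse_eq_inv', ← Matrix.det_nonsing_inv, hB, Matrix.det_mul,
      Matrix.det_transpose, sq]
  have hS₀ := hS.det_pos
  refine ⟨B, -(B *ᵥ μ), fun hB₀ => by simp [hB₀, hS₀.ne'] at hdet, ?_⟩
  have hquad (x : Fin d → ℝ) :
      (x - μ) ⬝ᵥ (S⁻¹ *ᵥ (x - μ)) = (B *ᵥ x + -(B *ᵥ μ)) ⬝ᵥ (B *ᵥ x + -(B *ᵥ μ)) := by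
    rw [← sub_eq_add_neg, ← Matrix.mulVec_sub, hB, ← Matrix.mulVec_mulVec,
      Matrix.dotProduct_mulVec, Matrix.vecMul_transpose]
  have hsqrt : √((2 * Real.pi) ^ d) = √(2 * Real.pi) ^ d := by
    rw [Real.sqrt_eq_iff_mul_self_eq (by positivity) (by positivity), ← mul_pow,
      Real.mul_self_sqrt (by positivity)]
  have hnorm : (√((2 * Real.pi) ^ d * S.det))⁻¹ = |B.det| * (√(2 * Real.pi))⁻¹ ^ d := by
    rw [Real.sqrt_mul (by positivity), mul_inv, mul_comm, ← Real.sqrt_inv, hdet,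
      Real.sqrt_sq_eq_abs, inv_pow, hsqrt]
  simp only [whitenedGaussian, gaussianPdf, stdGaussianDensity, hquad, hnorm, Fintype.card_fin,
    mul_assoc]

end WhitenedGaussian

section Perturbation

variable {ι : Type*} [Fintype ι]

lemma abs_det_le_prod_sum_abs [DecidableEq ι] (M : Matrix ι ι ℝ) :
    |M.det| ≤ ∏ i, ∑ j, |M i j| := by
  rw [← Matrix.det_transpose, Matrix.det_apply, Finset.prod_univ_sum]
  calc |∑ σ : Equiv.Perm ι, Equiv.Perm.sign σ • ∏ i, Mᵀ (σ i) i|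
      ≤ ∑ σ : Equiv.Perm ι, |Equiv.Perm.sign σ • ∏ i, Mᵀ (σ i) i| := Finset.abs_sum_le_sum_abs _ _
    _ = ∑ σ : Equiv.Perm ι, ∏ i, |M i (σ i)| := by
      refine Finset.sum_congr rfl fun σ _ => ?_
      rw [← Finset.abs_prod]
      rcases Int.units_eq_one_or (Equiv.Perm.sign σ) with h | h <;> simp [h]
    _ = ∑ p ∈ Finset.univ.image fun σ : Equiv.Perm ι => (σ : ι → ι), ∏ i, |M i (p i)| :=
      (Finset.sum_image (f := fun p : ι → ι => ∏ i, |M i (p i)|)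
        fun _ _ _ _ h => DFunLike.coe_injective h).symm
    _ ≤ ∑ p ∈ Fintype.piFinset fun _ => Finset.univ, ∏ i, |M i (p i)| :=
      Finset.sum_le_sum_of_subset_of_nonneg (fun p _ => by simp)
        fun p _ _ => Finset.prod_nonneg fun i _ => abs_nonneg _

lemma sum_abs_le_of_entries_le {ε : ℝ} {E : Matrix ι ι ℝ} (hE : ∀ i j, |E i j| ≤ ε) (i : ι) :
    ∑ j, |E i j| ≤ Fintype.card ι * ε :=
  (Finset.sum_le_sum fun j _ => hE i j).trans_eq (by simp)

lemma abs_det_one_add_le [DecidableEq ι] {ε : ℝ} {E : Matrix ι ι ℝ} (hE : ∀ i j, |E i j| ≤ ε) :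
    |(1 + E).det| ≤ Real.exp (Fintype.card ι ^ 2 * ε) := by
  have hrow (i : ι) : ∑ j, |(1 + E) i j| ≤ Real.exp (Fintype.card ι * ε) :=
    calc ∑ j, |(1 + E) i j| ≤ ∑ j, (|(1 : Matrix ι ι ℝ) i j| + |E i j|) :=
          Finset.sum_le_sum fun j _ => abs_add_le _ _
      _ = ∑ j, |E i j| + 1 := by
          simp [Finset.sum_add_distrib, Matrix.one_apply, apply_ite abs, add_comm]
      _ ≤ Fintype.card ι * ε + 1 := by gcongr; exact sum_abs_le_of_entries_le hE i
      _ ≤ _ := Real.add_one_le_exp _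
  calc |(1 + E).det| ≤ ∏ i, ∑ j, |(1 + E) i j| := abs_det_le_prod_sum_abs _
    _ ≤ ∏ _i : ι, Real.exp (Fintype.card ι * ε) :=
      Finset.prod_le_prod (fun i _ => Finset.sum_nonneg fun j _ => abs_nonneg _) fun i _ => hrow i
    _ = _ := by
      rw [Finset.prod_const, Finset.card_univ, ← Real.exp_nat_mul, sq, mul_assoc]

lemma det_one_add_ne_zero [DecidableEq ι] {ε : ℝ} {E : Matrix ι ι ℝ}
    (hE : ∀ i j, |E i j| ≤ ε) (hε : Fintype.card ι * ε < 1) : (1 + E).det ≠ 0 := by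
  refine det_ne_zero_of_sum_row_lt_diag fun i => ?_
  have hoff : ∑ j ∈ Finset.univ.erase i, ‖(1 + E) i j‖ = ∑ j ∈ Finset.univ.erase i, |E i j| :=
    Finset.sum_congr rfl fun j hj => by simp [Matrix.one_apply_ne (Finset.ne_of_mem_erase hj).symm]
  have hsplit := Finset.sum_erase_add Finset.univ (fun j => |E i j|) (Finset.mem_univ i)
  have hrow := sum_abs_le_of_entries_le hE i
  have hdiag : 1 - |E i i| ≤ ‖(1 + E) i i‖ := by
    simpa [sub_neg_eq_add] using norm_sub_norm_le (1 : ℝ) (-E i i)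
  linarith

lemma dotProduct_self_mulVec_add_le {ε : ℝ} {E : Matrix ι ι ℝ} {e : ι → ℝ}
    (hE : ∀ i j, |E i j| ≤ ε) (he : ∀ i, |e i| ≤ ε) (z : ι → ℝ) :
    (E *ᵥ z + e) ⬝ᵥ (E *ᵥ z + e) ≤
      2 * (Fintype.card ι * ε) ^ 2 * (z ⬝ᵥ z) + 2 * Fintype.card ι * ε ^ 2 := by
  have hz : z ⬝ᵥ z = ∑ i, z i ^ 2 := by simp only [dotProduct, sq]
  have hEz (i : ι) : (E *ᵥ z) i ^ 2 ≤ Fintype.card ι * ε ^ 2 * (z ⬝ᵥ z) := by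
    refine (Finset.sum_mul_sq_le_sq_mul_sq Finset.univ (E i) z).trans ?_
    rw [hz]
    gcongr
    exact (Finset.sum_le_sum fun j _ => sq_le_sq' (abs_le.1 (hE i j)).1 (abs_le.1 (hE i j)).2
      ).trans_eq (by simp)
  calc (E *ᵥ z + e) ⬝ᵥ (E *ᵥ z + e)
      ≤ ∑ _i : ι, (2 * (Fintype.card ι * ε ^ 2 * (z ⬝ᵥ z)) + 2 * ε ^ 2) := by
        refine Finset.sum_le_sum fun i _ => ?_
        have hei := sq_le_sq' (abs_le.1 (he i)).1 (abs_le.1 (he i)).2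
        simp only [Pi.add_apply]
        nlinarith [sq_nonneg ((E *ᵥ z) i - e i), hEz i]
    _ = _ := by
        simp only [Finset.sum_const, Finset.card_univ, nsmul_eq_mul]
        ring

lemma dotProduct_self_le_add {η : ℝ} (hη : 0 < η) (z w : ι → ℝ) :
    z ⬝ᵥ z ≤ (1 + η) * ((z + w) ⬝ᵥ (z + w)) + (1 + 1 / η) * (w ⬝ᵥ w) := by
  simp only [dotProduct, Finset.mul_sum, ← Finset.sum_add_distrib]
  refine Finset.sum_le_sum fun i _ => ?_
  have hsq : (1 + η) * ((z i + w i) * (z i + w i)) + (1 + 1 / η) * (w i * w i) - z i * z i =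
      (η * (z i + w i) + w i) ^ 2 / η := by
    field_simp
    ring
  have : 0 ≤ (η * (z i + w i) + w i) ^ 2 / η := by positivity
  simp only [Pi.add_apply]
  linarith

lemma exp_mul_dotProduct_self_le [Nonempty ι] [DecidableEq ι] {ε : ℝ} (hε : 0 < ε)
    (hη : Fintype.card ι * ε ≤ 1 / 10) {E : Matrix ι ι ℝ} {e : ι → ℝ}
    (hE : ∀ i j, |E i j| ≤ ε) (he : ∀ i, |e i| ≤ ε) (z : ι → ℝ) :
    Real.exp (-(10 * (Fintype.card ι * ε))) * (z ⬝ᵥ z) ≤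
      ((1 + E) *ᵥ z + e) ⬝ᵥ ((1 + E) *ᵥ z + e) + 4 * ε := by
  set η := Fintype.card ι * ε with hη_def
  have hη₀ : 0 < η := by positivity
  have hV : (1 + E) *ᵥ z + e = z + (E *ᵥ z + e) := by
    rw [Matrix.add_mulVec, Matrix.one_mulVec, add_assoc]
  rw [hV]
  have hsplit := dotProduct_self_le_add hη₀ z (E *ᵥ z + e)
  have hpert := dotProduct_self_mulVec_add_le hE he z
  set V := (z + (E *ᵥ z + e)) ⬝ᵥ (z + (E *ᵥ z + e))
  have hV₀ : 0 ≤ V := Finset.sum_nonneg fun i _ => mul_self_nonneg _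
  have hlin : (1 - 4 * η) * (z ⬝ᵥ z) ≤ (1 + η) * V + 4 * ε := by
    have hcoef : 1 + 1 / η ≤ 2 / η := by
      rw [le_div_iff₀ hη₀]
      field_simp
      linarith
    have herr : (1 + 1 / η) * ((E *ᵥ z + e) ⬝ᵥ (E *ᵥ z + e)) ≤ 4 * η * (z ⬝ᵥ z) + 4 * ε :=
      calc _ ≤ 2 / η * (2 * η ^ 2 * (z ⬝ᵥ z) + 2 * Fintype.card ι * ε ^ 2) :=
            mul_le_mul hcoef hpert (Finset.sum_nonneg fun i _ => mul_self_nonneg _) (by positivity)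
        _ = 2 / η * (2 * η ^ 2 * (z ⬝ᵥ z) + 2 * η * ε) := by rw [hη_def]; ring
        _ = _ := by field_simp; ring
    linarith
  have hexp : Real.exp (-(10 * η)) * (1 + η) ≤ 1 - 4 * η := by
    rw [Real.exp_neg, inv_mul_le_iff₀ (Real.exp_pos _)]
    nlinarith [Real.add_one_le_exp (10 * η)]
  have hq := Real.exp_pos (-(10 * η))
  refine le_of_mul_le_mul_left ?_ (by linarith : 0 < 1 - 4 * η)
  nlinarith [mul_le_mul_of_nonneg_left hlin hq.le, mul_le_mul_of_nonneg_right hexp hV₀,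
    mul_le_mul_of_nonneg_right hexp hε.le, mul_pos hq hη₀, mul_pos (mul_pos hq hη₀) hε]

variable [DecidableEq ι]

lemma whitenedGaussian_mul_le_smul_rescale {A B : Matrix ι ι ℝ} {b e : ι → ℝ} {t s : ℝ}
    (ht : 0 < t) (h : ∀ z, t ^ 2 * (z ⬝ᵥ z) ≤ (A *ᵥ z + e) ⬝ᵥ (A *ᵥ z + e) + s) :
    whitenedGaussian (A * B) (A *ᵥ b + e) ≤
      ENNReal.ofReal (|A.det| * Real.exp (s / 2) * (t ^ Fintype.card ι)⁻¹) •
        whitenedGaussian (t • B) (t • b) := by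
  refine whitenedGaussian_le_smul (by positivity) fun x => ?_
  have hx : (A * B) *ᵥ x + (A *ᵥ b + e) = A *ᵥ (B *ᵥ x + b) + e := by
    rw [Matrix.mulVec_add, Matrix.mulVec_mulVec, add_assoc]
  have htx : (t • B) *ᵥ x + t • b = t • (B *ᵥ x + b) := by
    rw [Matrix.smul_mulVec, smul_add]
  have hdens : stdGaussianDensity (A *ᵥ (B *ᵥ x + b) + e) ≤
      Real.exp (s / 2) * stdGaussianDensity (t • (B *ᵥ x + b)) := by
    rw [stdGaussianDensity, stdGaussianDensity, mul_left_comm, ← Real.exp_add]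
    gcongr
    have := h (B *ᵥ x + b)
    rw [dotProduct_smul, smul_dotProduct, smul_eq_mul, smul_eq_mul]
    linarith
  rw [hx, htx, Matrix.det_mul, Matrix.det_smul, abs_mul, abs_mul, abs_pow, abs_of_pos ht]
  calc |A.det| * |B.det| * stdGaussianDensity (A *ᵥ (B *ᵥ x + b) + e)
      ≤ |A.det| * |B.det| * (Real.exp (s / 2) * stdGaussianDensity (t • (B *ᵥ x + b))) := by
        gcongr
    _ = _ := by field_simp

lemma exp_sub_one_le_two_mul {x : ℝ} (hx₀ : 0 ≤ x) (hx : x ≤ 1) : Real.exp x - 1 ≤ 2 * x := by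
  have := (abs_le.1 (Real.abs_exp_sub_one_sub_id_le (abs_le.2 ⟨by linarith, hx⟩))).2
  nlinarith

lemma tvDist_perturb_rescale_le [Nonempty ι] {ε : ℝ} (hε : 0 < ε)
    (hη : Fintype.card ι * ε ≤ 1 / 10) {E : Matrix ι ι ℝ} {e : ι → ℝ} (hE : ∀ i j, |E i j| ≤ ε)
    (he : ∀ i, |e i| ≤ ε) {B : Matrix ι ι ℝ} (hB : B.det ≠ 0) (b : ι → ℝ) {t : ℝ}
    (ht : t = Real.exp (-(5 * (Fintype.card ι * ε)))) :
    tvDist (whitenedGaussian ((1 + E) * B) ((1 + E) *ᵥ b + e))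
      (whitenedGaussian (t • B) (t • b)) ≤ Real.exp (8 * (Fintype.card ι ^ 2 * ε)) - 1 := by
  have hn : (1 : ℝ) ≤ Fintype.card ι := by exact_mod_cast Fintype.card_pos
  have htn : (t ^ Fintype.card ι)⁻¹ = Real.exp (5 * (Fintype.card ι ^ 2 * ε)) := by
    rw [ht, ← Real.exp_nat_mul, ← Real.exp_neg]
    congr 1
    ring
  have ht₀ : 0 < t := ht ▸ Real.exp_pos _
  have hdet : ((1 + E) * B).det ≠ 0 := by
    rw [Matrix.det_mul]
    exact mul_ne_zero (det_one_add_ne_zero hE (by linarith)) hB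
  have := isProbabilityMeasure_whitenedGaussian hdet ((1 + E) *ᵥ b + e)
  have := isProbabilityMeasure_whitenedGaussian
    (by rw [Matrix.det_smul]; positivity : (t • B).det ≠ 0) (t • b)
  have hdom := whitenedGaussian_mul_le_smul_rescale (B := B) (b := b) (s := 4 * ε) ht₀ fun z => by
    convert exp_mul_dotProduct_self_le hε hη hE he z using 2
    rw [ht, ← Real.exp_nat_mul]
    congr 1
    push_cast
    ring
  rw [htn] at hdom
  refine (tvDist_le_of_le_smul (by positivity) hdom).trans (sub_le_sub_right ?_ 1)
  have hε_le : 4 * ε / 2 ≤ 2 * (Fintype.card ι ^ 2 * ε) := by nlinarith [one_le_pow₀ hn (n := 2)]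
  calc |(1 + E).det| * Real.exp (4 * ε / 2) * Real.exp (5 * (Fintype.card ι ^ 2 * ε))
      ≤ Real.exp (Fintype.card ι ^ 2 * ε) * Real.exp (2 * (Fintype.card ι ^ 2 * ε)) *
          Real.exp (5 * (Fintype.card ι ^ 2 * ε)) := by
        gcongr
        exact abs_det_one_add_le hE
    _ = _ := by
        rw [← Real.exp_add, ← Real.exp_add]
        congr 1
        ring

-- Both Gaussians are compared with the same slightly inflated one, whose tails dominate theirs.
lemma tvDist_whitenedGaussian_perturb_le [Nonempty ι] {ε : ℝ} (hε : 0 < ε)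
    (hsmall : Fintype.card ι ^ 2 * ε ≤ 1 / 10) {E : Matrix ι ι ℝ} {e : ι → ℝ}
    (hE : ∀ i j, |E i j| ≤ ε) (he : ∀ i, |e i| ≤ ε) {B : Matrix ι ι ℝ} (hB : B.det ≠ 0)
    (b : ι → ℝ) :
    tvDist (whitenedGaussian B b) (whitenedGaussian ((1 + E) * B) ((1 + E) *ᵥ b + e)) ≤
      32 * (Fintype.card ι ^ 2 * ε) := by
  have hn : (1 : ℝ) ≤ Fintype.card ι := by exact_mod_cast Fintype.card_pos
  have hη : Fintype.card ι * ε ≤ 1 / 10 :=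
    (mul_le_mul_of_nonneg_right (le_self_pow₀ hn two_ne_zero) hε.le).trans hsmall
  set t := Real.exp (-(5 * (Fintype.card ι * ε))) with ht
  have hdet : ((1 + E) * B).det ≠ 0 := by
    rw [Matrix.det_mul]
    exact mul_ne_zero (det_one_add_ne_zero hE (by linarith)) hB
  have := isProbabilityMeasure_whitenedGaussian hB b
  have := isProbabilityMeasure_whitenedGaussian hdet ((1 + E) *ᵥ b + e)
  have := isProbabilityMeasure_whitenedGaussian
    (by rw [Matrix.det_smul]; positivity : (t • B).det ≠ 0) (t • b)
  have hdom := tvDist_perturb_rescale_le hε hη (E := 0) (e := 0) (by simp [hε.le])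
    (by simp [hε.le]) hB b ht
  simp only [add_zero, one_mul, Matrix.one_mulVec] at hdom
  have hdom' := tvDist_perturb_rescale_le hε hη hE he hB b ht
  have hexp : Real.exp (8 * (Fintype.card ι ^ 2 * ε)) - 1 ≤ 2 * (8 * (Fintype.card ι ^ 2 * ε)) :=
    exp_sub_one_le_two_mul (by positivity) (by linarith)
  have htri := tvDist_triangle (whitenedGaussian B b) (whitenedGaussian (t • B) (t • b))
    (whitenedGaussian ((1 + E) * B) ((1 + E) *ᵥ b + e))
  rw [tvDist_comm (whitenedGaussian (t • B) (t • b))] at htri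
  linarith

end Perturbation

section Frames

variable {d : ℕ}

/-- Homogeneous coordinates of a point of `ℝ^d`, the last coordinate being `1`. -/
def homogenize (z : Fin d → ℝ) : Fin (d + 1) → ℝ :=
  Fin.snoc (α := fun _ => ℝ) z 1

@[simp]
lemma homogenize_castSucc (z : Fin d → ℝ) (a : Fin d) : homogenize z a.castSucc = z a := by
  simp [homogenize]

@[simp]
lemma homogenize_last (z : Fin d → ℝ) : homogenize z (Fin.last d) = 1 := by
  simp [homogenize]

/-- The matrix whose columns are the points `Y 0, …, Y d` of `ℝ^d` in homogeneous coordinates.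
Its determinant is, up to sign and a factorial, the volume of their simplex. -/
def frame (Y : Fin (d + 1) → Fin d → ℝ) : Matrix (Fin (d + 1)) (Fin (d + 1)) ℝ :=
  (Matrix.of fun i => homogenize (Y i))ᵀ

@[simp]
lemma frame_apply (Y : Fin (d + 1) → Fin d → ℝ) (r i : Fin (d + 1)) :
    frame Y r i = homogenize (Y i) r :=
  rfl

lemma vecMul_frame (F : Fin (d + 1) → ℝ) (Y : Fin (d + 1) → Fin d → ℝ) (i : Fin (d + 1)) :
    (F ᵥ* frame Y) i = (fun c : Fin d => F c.castSucc) ⬝ᵥ Y i + F (Fin.last d) := by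
  simp [Matrix.vecMul, dotProduct, Fin.sum_univ_castSucc]

lemma det_frame_ne_zero_of_affine {B : Matrix (Fin d) (Fin d) ℝ} {b : Fin d → ℝ}
    {y : Fin (d + 1) → Fin d → ℝ} (h : (frame fun i => B *ᵥ y i + b).det ≠ 0) :
    (frame y).det ≠ 0 := by
  let M : Matrix (Fin (d + 1)) (Fin (d + 1)) ℝ := Matrix.of <|
    Fin.snoc (α := fun _ => Fin (d + 1) → ℝ)
      (fun a => Fin.snoc (α := fun _ => ℝ) (B a) (b a)) (Pi.single (Fin.last d) 1)
  have hM : (frame fun i => B *ᵥ y i + b) = M * frame y := by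
    ext r i
    rw [Matrix.mul_apply_eq_vecMul, vecMul_frame]
    refine Fin.lastCases ?_ (fun a => ?_) r
    · simp [M, dotProduct]
    · simp [M, Matrix.mulVec]
  rw [hM, Matrix.det_mul] at h
  exact right_ne_zero_of_mul h

lemma affine_unique_of_det_frame_ne_zero {y : Fin (d + 1) → Fin d → ℝ}
    (hy : (frame y).det ≠ 0) {C C' : Matrix (Fin d) (Fin d) ℝ} {c c' : Fin d → ℝ}
    (h : ∀ i, C *ᵥ y i + c = C' *ᵥ y i + c') : C = C' ∧ c = c' := by
  have hrow (a : Fin d) : Fin.snoc (α := fun _ => ℝ) (C a) (c a) =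
      (Fin.snoc (α := fun _ => ℝ) (C' a) (c' a) : Fin (d + 1) → ℝ) := by
    refine Matrix.vecMul_injective_of_isUnit
      ((Matrix.isUnit_iff_isUnit_det _).2 hy.isUnit) (funext fun i => ?_)
    simpa [vecMul_frame, Matrix.mulVec] using congrFun (h i) a
  constructor
  · ext a j
    simpa using congrFun (hrow a) j.castSucc
  · ext a
    simpa using congrFun (hrow a) (Fin.last d)

/-- The arrays `V` (indexed coordinate first) of images `V · i = (1 + E) (Y i) + e` of the points
`Y i` under affine maps `ε`-close to the identity. -/
def frameCell (ε : ℝ) (Y : Fin (d + 1) → Fin d → ℝ) : Set (Fin d → Fin (d + 1) → ℝ) :=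
  Set.univ.pi fun a => (fun v => (fun i => Y i a) + v) ''
    (Matrix.toLin' (frame Y)ᵀ '' Set.univ.pi fun _ => Set.Icc (-ε) ε)

lemma exists_affine_of_mem_frameCell {ε : ℝ} {Y : Fin (d + 1) → Fin d → ℝ}
    {V : Fin d → Fin (d + 1) → ℝ} (hV : V ∈ frameCell ε Y) :
    ∃ (E : Matrix (Fin d) (Fin d) ℝ) (e : Fin d → ℝ), (∀ i j, |E i j| ≤ ε) ∧ (∀ i, |e i| ≤ ε) ∧
      ∀ a i, V a i = ((1 + E) *ᵥ Y i + e : Fin d → ℝ) a := by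
  have hrow (a : Fin d) : ∃ F : Fin (d + 1) → ℝ, (∀ r, |F r| ≤ ε) ∧
      ∀ i, V a i = Y i a + (F ᵥ* frame Y) i := by
    obtain ⟨_, ⟨F, hF, rfl⟩, hVa⟩ := hV a (Set.mem_univ a)
    refine ⟨F, fun r => abs_le.2 (hF r (Set.mem_univ r)), fun i => ?_⟩
    rw [← hVa]
    simp [Matrix.mulVec_transpose]
  choose F hF hVF using hrow
  refine ⟨Matrix.of fun a c => F a c.castSucc, fun a => F a (Fin.last d), fun _ _ => hF _ _,
    fun _ => hF _ _, fun a i => ?_⟩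
  rw [hVF, vecMul_frame, Matrix.add_mulVec, Matrix.one_mulVec, Pi.add_apply, Pi.add_apply,
    add_assoc]
  rfl

lemma measurableSet_frameCell (ε : ℝ) (Y : Fin (d + 1) → Fin d → ℝ) :
    MeasurableSet (frameCell ε Y) :=
  .univ_pi fun _ => (((isCompact_univ_pi fun _ => isCompact_Icc).image
    (LinearMap.continuous_of_finiteDimensional _)).image (by fun_prop)).measurableSet

lemma volume_frameCell {ε : ℝ} (hε : 0 ≤ ε) (Y : Fin (d + 1) → Fin d → ℝ) :
    volume (frameCell ε Y) = ENNReal.ofReal ((|(frame Y).det| * (2 * ε) ^ (d + 1)) ^ d) := by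
  have hcube : volume (Set.univ.pi fun _ : Fin (d + 1) => Set.Icc (-ε) ε) =
      ENNReal.ofReal ((2 * ε) ^ (d + 1)) := by
    simp [Real.volume_Icc_pi, ← ENNReal.ofReal_pow, hε, two_mul]
  rw [frameCell, volume_pi_pi]
  simp_rw [Set.image_add_left, measure_preimage_add, Measure.addHaar_image_linearMap, hcube,
    LinearMap.det_toLin', Matrix.det_transpose, ← ENNReal.ofReal_mul (abs_nonneg _)]
  rw [Finset.prod_const, Finset.card_univ, Fintype.card_fin, ENNReal.ofReal_pow (by positivity)]

lemma frameCell_subset_pi_Icc {ε R : ℝ} (hε : (d + 1) * ε ≤ 1) (hR : 1 ≤ R)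
    {Y : Fin (d + 1) → Fin d → ℝ} (hY : ∀ i a, |Y i a| ≤ R) :
    frameCell ε Y ⊆ Set.univ.pi fun _ => Set.univ.pi fun _ => Set.Icc (-(2 * R)) (2 * R) := by
  intro V hV a _ i _
  obtain ⟨E, e, hE, he, hVE⟩ := exists_affine_of_mem_frameCell hV
  have hEY : |(E *ᵥ Y i) a| ≤ d * ε * R :=
    calc |(E *ᵥ Y i) a| ≤ ∑ c, |E a c * Y i c| :=
          Finset.abs_sum_le_sum_abs (s := Finset.univ) (f := fun c => E a c * Y i c)
      _ ≤ ∑ _c : Fin d, ε * R := Finset.sum_le_sum fun c _ => by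
          rw [abs_mul]
          exact mul_le_mul (hE a c) (hY i c) (abs_nonneg _) ((abs_nonneg _).trans (hE a c))
      _ = d * ε * R := by simp [mul_assoc]
  have hea := he a
  have hε₀ : 0 ≤ ε := (abs_nonneg _).trans hea
  refine abs_le.1 ?_
  rw [hVE, Matrix.add_mulVec, Matrix.one_mulVec]
  calc |(Y i + E *ᵥ Y i + e) a| ≤ |Y i a| + |(E *ᵥ Y i) a| + |e a| := abs_add_three _ _ _
    _ ≤ 2 * R := by nlinarith [hY i a]

lemma tvDist_le_of_mem_frameCell_inter [NeZero d] {ε : ℝ} (hε : 0 < ε)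
    (hsmall : (d : ℝ) ^ 2 * ε ≤ 1 / 10) {B₁ B₂ : Matrix (Fin d) (Fin d) ℝ} {b₁ b₂ : Fin d → ℝ}
    (hB₁ : B₁.det ≠ 0) (hB₂ : B₂.det ≠ 0) {y : Fin (d + 1) → Fin d → ℝ}
    (hy : (frame fun i => B₁ *ᵥ y i + b₁).det ≠ 0) {V : Fin d → Fin (d + 1) → ℝ}
    (hV₁ : V ∈ frameCell ε fun i => B₁ *ᵥ y i + b₁)
    (hV₂ : V ∈ frameCell ε fun i => B₂ *ᵥ y i + b₂) :
    tvDist (whitenedGaussian B₁ b₁) (whitenedGaussian B₂ b₂) ≤ 64 * (d ^ 2 * ε) := by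
  have hd : (1 : ℝ) ≤ d := by exact_mod_cast NeZero.one_le
  obtain ⟨E₁, e₁, hE₁, he₁, hVE₁⟩ := exists_affine_of_mem_frameCell hV₁
  obtain ⟨E₂, e₂, hE₂, he₂, hVE₂⟩ := exists_affine_of_mem_frameCell hV₂
  have hd_small : (Fintype.card (Fin d) : ℝ) * ε < 1 := by
    rw [Fintype.card_fin]
    linarith [mul_le_mul_of_nonneg_right (le_self_pow₀ hd two_ne_zero) hε.le]
  have hpert₁ := tvDist_whitenedGaussian_perturb_le hε (by simpa using hsmall) hE₁ he₁ hB₁ b₁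
  have hpert₂ := tvDist_whitenedGaussian_perturb_le hε (by simpa using hsmall) hE₂ he₂ hB₂ b₂
  obtain ⟨hC, hc⟩ : (1 + E₁) * B₁ = (1 + E₂) * B₂ ∧
      (1 + E₁) *ᵥ b₁ + e₁ = (1 + E₂) *ᵥ b₂ + e₂ := by
    refine affine_unique_of_det_frame_ne_zero (det_frame_ne_zero_of_affine hy) fun i => ?_
    ext a
    have h := (hVE₁ a i).symm.trans (hVE₂ a i)
    rwa [Matrix.mulVec_add, Matrix.mulVec_mulVec, add_assoc, Matrix.mulVec_add,
      Matrix.mulVec_mulVec, add_assoc] at h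
  rw [hC, hc, Fintype.card_fin] at hpert₁
  rw [tvDist_comm, Fintype.card_fin] at hpert₂
  have := isProbabilityMeasure_whitenedGaussian hB₁ b₁
  have := isProbabilityMeasure_whitenedGaussian hB₂ b₂
  have : IsProbabilityMeasure (whitenedGaussian ((1 + E₂) * B₂) ((1 + E₂) *ᵥ b₂ + e₂)) := by
    refine isProbabilityMeasure_whitenedGaussian ?_ _
    rw [Matrix.det_mul]
    exact mul_ne_zero (det_one_add_ne_zero hE₂ hd_small) hB₂
  linarith [tvDist_triangle (whitenedGaussian B₁ b₁)
    (whitenedGaussian ((1 + E₂) * B₂) ((1 + E₂) *ᵥ b₂ + e₂)) (whitenedGaussian B₂ b₂)]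

/-- The Gaussian measures in whose whitened coordinates the points `y 0, …, y d` lie in the open
cube of half-side `R` and span a simplex of normalized volume larger than `D`. -/
def framedGaussians (R D : ℝ) (y : Fin (d + 1) → Fin d → ℝ) : Set (Measure (Fin d → ℝ)) :=
  {P | ∃ (B : Matrix (Fin d) (Fin d) ℝ) (b : Fin d → ℝ), B.det ≠ 0 ∧ P = whitenedGaussian B b ∧
    (∀ i a, |(B *ᵥ y i + b) a| < R) ∧ D < |(frame fun i => B *ᵥ y i + b).det|}

lemma isProbabilityMeasure_of_mem_framedGaussians {R D : ℝ} {y : Fin (d + 1) → Fin d → ℝ}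
    {P : Measure (Fin d → ℝ)} (hP : P ∈ framedGaussians R D y) : IsProbabilityMeasure P := by
  obtain ⟨B, b, hB, rfl, -⟩ := hP
  exact isProbabilityMeasure_whitenedGaussian hB b

-- Separated Gaussians have disjoint cells, all of large volume and inside a common box.
lemma card_le_of_subset_framedGaussians [NeZero d] {ε R c : ℝ} (hε : 0 < ε)
    (hsmall : (d : ℝ) ^ 2 * ε ≤ 1 / 10) (hR : 1 ≤ R) (hc : 0 < c) {y : Fin (d + 1) → Fin d → ℝ}
    {s : Finset (Measure (Fin d → ℝ))} (hs : ↑s ⊆ framedGaussians R (c ^ (d + 1)) y)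
    (hsep : (s : Set (Measure (Fin d → ℝ))).Pairwise fun P Q => 64 * (d ^ 2 * ε) < tvDist P Q) :
    (s.card : ℝ) ≤ (2 * R / (c * ε)) ^ (d * (d + 1)) := by
  have hd : (1 : ℝ) ≤ d := by exact_mod_cast NeZero.one_le
  choose! B b hB hP hyR hyD using fun P (hPs : P ∈ s) => hs hPs
  have hdisj : (s : Set (Measure (Fin d → ℝ))).PairwiseDisjoint
      fun P => frameCell ε fun i => B P *ᵥ y i + b P := by
    refine fun P hPs Q hQs hPQ => Set.disjoint_left.2 fun V hVP hVQ => ?_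
    have hlt := hsep hPs hQs hPQ
    rw [hP P hPs, hP Q hQs] at hlt
    exact hlt.not_ge <| tvDist_le_of_mem_frameCell_inter hε hsmall (hB P hPs) (hB Q hQs)
      (abs_pos.1 ((by positivity : 0 < c ^ (d + 1)).trans (hyD P hPs))) hVP hVQ
  have hbox : volume (⋃ P ∈ s, frameCell ε fun i => B P *ᵥ y i + b P) ≤
      ENNReal.ofReal ((4 * R) ^ (d * (d + 1))) := by
    refine (measure_mono (Set.iUnion₂_subset fun P hPs => frameCell_subset_pi_Icc
      (by nlinarith) hR fun i a => (hyR P hPs i a).le)).trans_eq ?_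
    simp only [volume_pi_pi, Real.volume_Icc, Finset.prod_const, Finset.card_univ,
      Fintype.card_fin]
    rw [← pow_mul, ← ENNReal.ofReal_pow (by linarith), mul_comm (d + 1)]
    congr 2
    ring
  have hcells : s.card * ENNReal.ofReal ((c ^ (d + 1) * (2 * ε) ^ (d + 1)) ^ d) ≤
      volume (⋃ P ∈ s, frameCell ε fun i => B P *ᵥ y i + b P) := by
    rw [measure_biUnion_finset hdisj fun P _ => measurableSet_frameCell _ _, ← nsmul_eq_mul]
    refine Finset.card_nsmul_le_sum _ _ _ fun P hPs => ?_
    rw [volume_frameCell hε.le]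
    have := (hyD P hPs).le
    gcongr
  have hcard := hcells.trans hbox
  rw [← ENNReal.ofReal_natCast, ← ENNReal.ofReal_mul (by positivity),
    ENNReal.ofReal_le_ofReal_iff (by positivity), ← mul_pow, ← pow_mul, mul_comm (d + 1)] at hcard
  calc (s.card : ℝ) ≤ (4 * R) ^ (d * (d + 1)) / (c * (2 * ε)) ^ (d * (d + 1)) :=
        (le_div_iff₀ (by positivity)).2 hcard
    _ = _ := by
        rw [← div_pow]
        congr 1
        field_simp
        ring

end Frames

section AntiConcentration

lemma measure_pi_le_of_forall_update {ι : Type*} [Fintype ι] [DecidableEq ι] {X : ι → Type*}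
    [∀ i, MeasurableSpace (X i)] (μ : ∀ i, Measure (X i)) [∀ i, IsProbabilityMeasure (μ i)] (i : ι)
    {A : Set (∀ i, X i)} (hA : MeasurableSet A) {a : ENNReal}
    (h : ∀ z, μ i {x | Function.update z i x ∈ A} ≤ a) : Measure.pi μ A ≤ a := by
  obtain ⟨z⟩ := (Measure.pi μ).nonempty_of_neZero
  have hmarginal (z : ∀ i, X i) :
      ∫⁻ x, A.indicator 1 (Function.update z i x) ∂μ i = μ i {x | Function.update z i x ∈ A} :=
    lintegral_indicator_one (measurable_update z hA)
  calc Measure.pi μ A = ∫⁻ x, A.indicator 1 x ∂Measure.pi μ := (lintegral_indicator_one hA).symm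
    _ = (∫⋯∫⁻_Finset.univ.erase i, fun z => μ i {x | Function.update z i x ∈ A} ∂μ) z := by
      rw [lintegral_eq_lmarginal_univ z, lmarginal_erase' _ (measurable_one.indicator hA)
        (Finset.mem_univ i)]
      simp_rw [hmarginal]
    _ ≤ (∫⋯∫⁻_Finset.univ.erase i, fun _ => a ∂μ) z := lmarginal_mono h z
    _ = a := by simp [lmarginal]

lemma stdGaussianPi_exists_le_abs {ι : Type*} [Fintype ι] {R : ℝ} (hR : 0 < R) :
    stdGaussianPi ι {z | ∃ a, R ≤ |z a|} ≤ ENNReal.ofReal (Fintype.card ι / R ^ 2) := by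
  have hchebyshev : gaussianReal 0 1 {x | R ≤ |x|} ≤ ENNReal.ofReal (1 / R ^ 2) := by
    simpa [variance_id_gaussianReal] using
      meas_ge_le_variance_div_sq (memLp_id_gaussianReal (μ := 0) (v := 1) 2) hR
  have hmeas : MeasurableSet {x : ℝ | R ≤ |x|} := measurableSet_le measurable_const (by fun_prop)
  have hcoord (a : ι) : stdGaussianPi ι {z | R ≤ |z a|} ≤ ENNReal.ofReal (1 / R ^ 2) :=
    ((measurePreserving_eval (fun _ : ι => gaussianReal 0 1) a).measure_preimage
      hmeas.nullMeasurableSet).trans_le hchebyshev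
  rw [Set.ofPred_exists]
  calc stdGaussianPi ι (⋃ a, {z | R ≤ |z a|})
      ≤ ∑ a, stdGaussianPi ι {z | R ≤ |z a|} := measure_iUnion_fintype_le _ _
    _ ≤ ∑ _a : ι, ENNReal.ofReal (1 / R ^ 2) := Finset.sum_le_sum fun a _ => hcoord a
    _ = ENNReal.ofReal (Fintype.card ι / R ^ 2) := by
      rw [Finset.sum_const, Finset.card_univ, nsmul_eq_mul, ← ENNReal.ofReal_natCast,
        ← ENNReal.ofReal_mul (by positivity), mul_one_div]

lemma gaussianPDF_zero_one_le (x : ℝ) : gaussianPDF 0 1 x ≤ ENNReal.ofReal (1 / 2) := by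
  refine ENNReal.ofReal_le_ofReal ?_
  have hexp : Real.exp (-(x - 0) ^ 2 / (2 * ((1 : NNReal) : ℝ))) ≤ 1 :=
    Real.exp_le_one_iff.2 (by simp only [NNReal.coe_one]; nlinarith [sq_nonneg (x - 0)])
  have hsqrt : 2 ≤ √(2 * Real.pi * ((1 : NNReal) : ℝ)) :=
    Real.le_sqrt_of_sq_le (by simp only [NNReal.coe_one]; nlinarith [Real.pi_gt_three])
  calc gaussianPDFReal 0 1 x ≤ (√(2 * Real.pi * ((1 : NNReal) : ℝ)))⁻¹ * 1 := by
        rw [gaussianPDFReal]; gcongr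
    _ ≤ 1 / 2 := by rw [mul_one, one_div]; gcongr

lemma gaussianReal_abs_affine_le {r s : ℝ} (hs : s ≠ 0) (c : ℝ) :
    gaussianReal 0 1 {x | |s * x + c| ≤ r * |s|} ≤ ENNReal.ofReal r := by
  have hinterval : {x | |s * x + c| ≤ r * |s|} ⊆ Set.Icc (-c / s - r) (-c / s + r) := by
    intro x hx
    have hfactor : s * x + c = s * (x - -c / s) := by field_simp; ring
    rw [Set.mem_ofPred_eq, hfactor, abs_mul, mul_comm r, mul_le_mul_iff_right₀ (abs_pos.2 hs),
      abs_le] at hx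
    constructor <;> linarith
  calc gaussianReal 0 1 {x | |s * x + c| ≤ r * |s|}
      ≤ gaussianReal 0 1 (Set.Icc (-c / s - r) (-c / s + r)) := measure_mono hinterval
    _ = ∫⁻ x in Set.Icc (-c / s - r) (-c / s + r), gaussianPDF 0 1 x :=
      gaussianReal_apply _ one_ne_zero _
    _ ≤ ∫⁻ _ in Set.Icc (-c / s - r) (-c / s + r), ENNReal.ofReal (1 / 2) :=
      lintegral_mono gaussianPDF_zero_one_le
    _ = ENNReal.ofReal r := by
      rw [setLIntegral_const, Real.volume_Icc, ← ENNReal.ofReal_mul (by norm_num)]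
      congr 1
      ring

variable {d : ℕ}

lemma continuous_homogenize : Continuous (homogenize (d := d)) :=
  continuous_pi fun r => r.lastCases (by simpa using continuous_const)
    fun a => by simpa using continuous_apply a

lemma continuous_det_updateCol_homogenize (W : Matrix (Fin (d + 1)) (Fin (d + 1)) ℝ)
    (n : Fin (d + 1)) : Continuous fun z => (W.updateCol n (homogenize z)).det :=
  (continuous_const.matrix_updateCol n continuous_homogenize).matrix_det

lemma det_updateCol_homogenize {W : Matrix (Fin (d + 1)) (Fin (d + 1)) ℝ} {n : Fin d}
    (hW : W.col n.castSucc = Pi.single n.castSucc 1) (z : Fin d → ℝ) (x : ℝ) :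
    (W.updateCol n.castSucc (homogenize (Function.update z n x))).det =
      W.det * x + (W.updateCol n.castSucc (homogenize (Function.update z n 0))).det := by
  have hsplit : homogenize (Function.update z n x) =
      x • W.col n.castSucc + homogenize (Function.update z n 0) := by
    rw [hW]
    ext r
    refine r.lastCases (by simp) fun a => ?_
    rcases eq_or_ne a n with rfl | ha <;> simp [*]
  have hself : W.updateCol n.castSucc (W.col n.castSucc) = W := Matrix.updateCol_eq_self _ _
  rw [hsplit, Matrix.det_updateCol_add, Matrix.det_updateCol_smul, hself, mul_comm]

lemma stdGaussianPi_abs_det_updateCol_le {W : Matrix (Fin (d + 1)) (Fin (d + 1)) ℝ}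
    (hdet : W.det ≠ 0) {n : Fin d} (hW : W.col n.castSucc = Pi.single n.castSucc 1) {r : ℝ} :
    stdGaussianPi (Fin d) {z | |(W.updateCol n.castSucc (homogenize z)).det| ≤ r * |W.det|} ≤
      ENNReal.ofReal r := by
  refine measure_pi_le_of_forall_update _ n (measurableSet_le
    (continuous_det_updateCol_homogenize W _).abs.measurable measurable_const) fun z => ?_
  refine (measure_mono fun x hx => ?_).trans (gaussianReal_abs_affine_le hdet
    (W.updateCol n.castSucc (homogenize (Function.update z n 0))).det)
  rwa [Set.mem_ofPred_eq, Set.mem_ofPred_eq, det_updateCol_homogenize hW] at hx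

/-- The points of the open cube of half-side `R` whose homogeneous coordinates may replace
column `n` of `W` at the cost of at most a factor `16` in the determinant. -/
def frameExtensions (R : ℝ) (W : Matrix (Fin (d + 1)) (Fin (d + 1)) ℝ) (n : Fin (d + 1)) :
    Set (Fin d → ℝ) :=
  {z | (∀ a, |z a| < R) ∧ 1 / 16 * |W.det| < |(W.updateCol n (homogenize z)).det|}

lemma stdGaussianPi_compl_frameExtensions_le {R : ℝ} (hR : 0 < R) (hRd : 16 * d ≤ R ^ 2)
    {W : Matrix (Fin (d + 1)) (Fin (d + 1)) ℝ} (hdet : W.det ≠ 0) {n : Fin (d + 1)}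
    (hW : ∀ i ≤ n, W.col i = Pi.single i 1) :
    stdGaussianPi (Fin d) (frameExtensions R W n)ᶜ ≤ ENNReal.ofReal (1 / 8) := by
  have hcover : (frameExtensions R W n)ᶜ ⊆ {z | ∃ a, R ≤ |z a|} ∪
      {z | |(W.updateCol n (homogenize z)).det| ≤ 1 / 16 * |W.det|} := by
    intro z hz
    simpa only [frameExtensions, Set.mem_compl_iff, Set.mem_union, Set.mem_ofPred_eq, not_and_or,
      not_forall, not_lt] using hz
  have htail : (Fintype.card (Fin d) / R ^ 2 : ℝ) ≤ 1 / 16 := by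
    rw [Fintype.card_fin, div_le_div_iff₀ (by positivity) (by norm_num)]
    linarith
  have hsmall_det : stdGaussianPi (Fin d)
      {z | |(W.updateCol n (homogenize z)).det| ≤ 1 / 16 * |W.det|} ≤ ENNReal.ofReal (1 / 16) := by
    induction n using Fin.lastCases with
    | cast n => exact stdGaussianPi_abs_det_updateCol_le hdet (hW _ le_rfl)
    | last =>
      obtain rfl : W = 1 := by
        ext r i
        simpa [Matrix.one_apply, Pi.single_apply] using congrFun (hW i i.le_last) r
      norm_num [← Matrix.cramer_apply]
  calc stdGaussianPi (Fin d) (frameExtensions R W n)ᶜ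
      ≤ ENNReal.ofReal (1 / 16) + ENNReal.ofReal (1 / 16) :=
        (measure_mono hcover).trans <| (measure_union_le _ _).trans <| add_le_add
          ((stdGaussianPi_exists_le_abs hR).trans (ENNReal.ofReal_le_ofReal htail)) hsmall_det
    _ = ENNReal.ofReal (1 / 8) := by
      rw [← ENNReal.ofReal_add (by norm_num) (by norm_num)]
      norm_num

end AntiConcentration

section SelectionProcess

lemma measureReal_pi_fin_succ_le {X : Type*} [MeasurableSpace X] (g : Measure X)
    [IsProbabilityMeasure g] {N : ℕ} {A : Set (Fin (N + 1) → X)} (hA : MeasurableSet A)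
    {s : Set X} (hs : MeasurableSet s) {a b : ℝ} (ha₀ : 0 ≤ a) (hb₀ : 0 ≤ b)
    (ha : ∀ x ∈ s, (Measure.pi fun _ : Fin N => g).real {S | Fin.cons x S ∈ A} ≤ a)
    (hb : ∀ x ∉ s, (Measure.pi fun _ : Fin N => g).real {S | Fin.cons x S ∈ A} ≤ b) :
    (Measure.pi fun _ : Fin (N + 1) => g).real A ≤ a * g.real s + b * (1 - g.real s) := by
  have hcons := (measurePreserving_piFinSuccAbove (fun _ : Fin (N + 1) => g) 0).symm
  have hsection (x : X) : Measure.pi (fun _ : Fin N => g) {S | Fin.cons x S ∈ A} ≤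
      s.indicator (fun _ => ENNReal.ofReal a) x + sᶜ.indicator (fun _ => ENNReal.ofReal b) x := by
    rw [← ofReal_measureReal]
    by_cases hx : x ∈ s
    · simpa [hx] using ENNReal.ofReal_le_ofReal (ha x hx)
    · simpa [hx] using ENNReal.ofReal_le_ofReal (hb x hx)
  rw [← probReal_compl_eq_one_sub hs]
  refine ENNReal.toReal_le_of_le_ofReal (by positivity) ?_
  calc Measure.pi (fun _ : Fin (N + 1) => g) A
      = ∫⁻ x, Measure.pi (fun _ : Fin N => g) {S | Fin.cons x S ∈ A} ∂g := by
        rw [← hcons.measure_preimage hA.nullMeasurableSet, Measure.prod_apply (hcons.measurable hA)]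
        simp only [Set.preimage, MeasurableEquiv.piFinSuccAbove_symm_apply, Fin.insertNthEquiv_zero,
          Set.mem_ofPred_eq]
        rfl
    _ ≤ ∫⁻ x, (s.indicator (fun _ => ENNReal.ofReal a) x +
          sᶜ.indicator (fun _ => ENNReal.ofReal b) x) ∂g := lintegral_mono hsection
    _ = ENNReal.ofReal (a * g.real s + b * g.real sᶜ) := by
        rw [lintegral_add_left (measurable_const.indicator hs), lintegral_indicator_const hs,
          lintegral_indicator_const hs.compl, ENNReal.ofReal_add (by positivity) (by positivity),
          ENNReal.ofReal_mul ha₀, ENNReal.ofReal_mul hb₀, ofReal_measureReal, ofReal_measureReal]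

lemma one_sub_mul_one_sub_exp_neg_one_nonneg {q : ℝ} (hq : q ≤ 1) :
    0 ≤ 1 - q * (1 - Real.exp (-1)) := by
  have hexp : Real.exp (-1) ≤ 1 := Real.exp_le_one_iff.2 (by norm_num)
  nlinarith [Real.exp_pos (-1)]

/-- A process that reads points of `X` one at a time. With `n + 1` points still to be selected it
may skip the point `x` or, if `x ∈ accept n W`, select it and pass from the state `W` to the state
`step n W x`, with `n` points left to select. -/
structure SelectionProcess (Ω X : Type*) where
  accept : ℕ → Ω → Set X
  step : ℕ → Ω → X → Ω

namespace SelectionProcess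

variable {Ω X : Type*} (G : SelectionProcess Ω X)

/-- The samples of size `N` from which `n` successive points can be selected, starting at `W`. -/
def completes : (N n : ℕ) → Ω → Set (Fin N → X)
  | _, 0, _ => Set.univ
  | 0, _ + 1, _ => ∅
  | N + 1, n + 1, W => {S | (S 0 ∈ G.accept n W ∧
      Fin.tail S ∈ completes N n (G.step n W (S 0))) ∨ Fin.tail S ∈ completes N (n + 1) W}

lemma exists_final_state_of_mem_completes {K : Set X} {J : ℕ → Ω → Prop}
    (hJ : ∀ n W, J (n + 1) W → ∀ x ∈ K, x ∈ G.accept n W → J n (G.step n W x)) :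
    ∀ {N n : ℕ} {W : Ω}, J n W → ∀ {S : Fin N → X}, (∀ i, S i ∈ K) → S ∈ G.completes N n W →
      ∃ W', J 0 W'
  | _, 0, W, hW, _, _, _ => ⟨W, hW⟩
  | 0, _ + 1, _, _, _, _, hc => by simp [completes] at hc
  | N + 1, n + 1, W, hW, S, hS, hc => by
    rw [completes] at hc
    obtain ⟨hx, hc⟩ | hc := hc
    · exact exists_final_state_of_mem_completes hJ (hJ n W hW _ (hS 0) hx) (fun i => hS i.succ) hc
    · exact exists_final_state_of_mem_completes hJ hW (fun i => hS i.succ) hc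

variable [TopologicalSpace Ω] [TopologicalSpace X]

lemma isOpen_completes (haccept : ∀ n, IsOpen {p : Ω × X | p.2 ∈ G.accept n p.1})
    (hstep : ∀ n, Continuous fun p : Ω × X => G.step n p.1 p.2) :
    ∀ N n, IsOpen {p : Ω × (Fin N → X) | p.2 ∈ G.completes N n p.1}
  | _, 0 => by simp [completes]
  | 0, n + 1 => by simp [completes]
  | N + 1, n + 1 => by
    have htail : Continuous fun p : Ω × (Fin (N + 1) → X) => Fin.tail p.2 := by
      unfold Fin.tail
      fun_prop
    have hhead : Continuous fun p : Ω × (Fin (N + 1) → X) => (p.1, p.2 0) := by fun_prop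
    simp only [completes]
    exact (((haccept n).preimage hhead).inter ((isOpen_completes haccept hstep N n).preimage
      (((hstep n).comp hhead).prodMk htail))).union
      ((isOpen_completes haccept hstep N (n + 1)).preimage (continuous_fst.prodMk htail))

lemma measureReal_compl_completes_succ_succ_le [MeasurableSpace X] [BorelSpace X]
    [SecondCountableTopology X] (g : Measure X) [IsProbabilityMeasure g]
    (haccept : ∀ n, IsOpen {p : Ω × X | p.2 ∈ G.accept n p.1})
    (hstep : ∀ n, Continuous fun p : Ω × X => G.step n p.1 p.2) {N n : ℕ} {W : Ω} {a b : ℝ}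
    (ha : 0 ≤ a) (hb : 0 ≤ b)
    (hselect : ∀ x ∈ G.accept n W,
      (Measure.pi fun _ : Fin N => g).real (G.completes N n (G.step n W x))ᶜ ≤ a)
    (hskip : (Measure.pi fun _ : Fin N => g).real (G.completes N (n + 1) W)ᶜ ≤ b) :
    (Measure.pi fun _ : Fin (N + 1) => g).real (G.completes (N + 1) (n + 1) W)ᶜ ≤
      a * g.real (G.accept n W) + b * (1 - g.real (G.accept n W)) := by
  have hopen : IsOpen (G.completes (N + 1) (n + 1) W) :=
    (G.isOpen_completes haccept hstep (N + 1) (n + 1)).preimage (Continuous.prodMk_right W)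
  have haccept_open : IsOpen (G.accept n W) :=
    (haccept n).preimage (Continuous.prodMk_right W)
  refine measureReal_pi_fin_succ_le g hopen.measurableSet.compl haccept_open.measurableSet ha hb
    (fun x hx => (measureReal_mono ?_).trans (hselect x hx))
    fun x _ => (measureReal_mono ?_).trans hskip
  · refine fun S hS hc => hS ?_
    rw [completes]
    exact Or.inl ⟨hx, hc⟩
  · refine fun S hS hc => hS ?_
    rw [completes]
    exact Or.inr hc

-- Each point pending multiplies the failure probability by at most `e`, each point read
-- multiplies it by at most `1 - q (1 - e⁻¹)`.
lemma measureReal_compl_completes_le [MeasurableSpace X] [BorelSpace X]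
    [SecondCountableTopology X] (g : Measure X) [IsProbabilityMeasure g]
    (haccept : ∀ n, IsOpen {p : Ω × X | p.2 ∈ G.accept n p.1})
    (hstep : ∀ n, Continuous fun p : Ω × X => G.step n p.1 p.2) {I : ℕ → Ω → Prop}
    (hI : ∀ n W, I (n + 1) W → ∀ x ∈ G.accept n W, I n (G.step n W x)) {q : ℝ}
    (hq₁ : q ≤ 1) (hq : ∀ n W, I (n + 1) W → q ≤ g.real (G.accept n W)) :
    ∀ N n W, I n W → (Measure.pi fun _ : Fin N => g).real (G.completes N n W)ᶜ ≤
      Real.exp n * (1 - q * (1 - Real.exp (-1))) ^ N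
  | _, 0, _, _ => by
    simpa [completes] using pow_nonneg (one_sub_mul_one_sub_exp_neg_one_nonneg hq₁) _
  | 0, n + 1, _, _ => by
    rw [pow_zero, mul_one]
    exact measureReal_le_one.trans (Real.one_le_exp (by positivity))
  | N + 1, n + 1, W, hW => by
    set r := 1 - q * (1 - Real.exp (-1)) with hr
    have hr₀ : 0 ≤ r := one_sub_mul_one_sub_exp_neg_one_nonneg hq₁
    have hexp : Real.exp (-1) ≤ 1 := Real.exp_le_one_iff.2 (by norm_num)
    have hexp_cancel : Real.exp 1 * Real.exp (-1) = 1 := by rw [← Real.exp_add]; simp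
    have hsum := G.measureReal_compl_completes_succ_succ_le g haccept hstep (by positivity)
      (by positivity)
      (fun x hx => measureReal_compl_completes_le g haccept hstep hI hq₁ hq N n _ (hI n W hW x hx))
      (measureReal_compl_completes_le g haccept hstep hI hq₁ hq N (n + 1) W hW)
    set u := g.real (G.accept n W)
    calc _ ≤ Real.exp n * r ^ N * u + Real.exp (n + 1 : ℕ) * r ^ N * (1 - u) := hsum
      _ = Real.exp (n + 1 : ℕ) * r ^ N * (1 - u * (1 - Real.exp (-1))) := by
        rw [Nat.cast_succ, Real.exp_add]
        linear_combination (-(Real.exp n * r ^ N * u)) * hexp_cancel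
      _ ≤ Real.exp (n + 1 : ℕ) * r ^ N * r := by
        gcongr
        rw [hr]
        nlinarith [hq n W hW]
      _ = Real.exp (n + 1 : ℕ) * r ^ (N + 1) := by rw [pow_succ, mul_assoc]

end SelectionProcess

end SelectionProcess

section FrameSelection

/-- `g` gives mass at least `q` to every event of `P`-probability at least `p`. This is how a
component of a mixture relates to the measure that the mixture approximates. -/
def ChargesHeavySets {X : Type*} [MeasurableSpace X] (p q : ℝ) (P g : Measure X) : Prop :=
  ∀ ⦃E : Set X⦄, MeasurableSet E → p ≤ P.real E → q ≤ g.real E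

variable {d : ℕ}

/-- After some columns of the identity, from the last one down, have been replaced by selected
points, the first `n` columns are intact and the determinant is still large. -/
structure IsPartialFrame (n : ℕ) (W : Matrix (Fin (d + 1)) (Fin (d + 1)) ℝ) : Prop where
  le : n ≤ d + 1
  le_abs_det : (1 / 16 : ℝ) ^ (d + 1 - n) ≤ |W.det|
  col_eq : ∀ i : Fin (d + 1), i.val < n → W.col i = Pi.single i 1

lemma isPartialFrame_one : IsPartialFrame (d + 1) (1 : Matrix (Fin (d + 1)) (Fin (d + 1)) ℝ) where
  le := le_rfl
  le_abs_det := by simp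
  col_eq i _ := by ext r; simp [Matrix.one_apply, Pi.single_apply]

namespace IsPartialFrame

variable {n : ℕ} {W : Matrix (Fin (d + 1)) (Fin (d + 1)) ℝ}

lemma val_ofNat (hW : IsPartialFrame (n + 1) W) : (Fin.ofNat (d + 1) n).val = n :=
  Nat.mod_eq_of_lt hW.le

lemma updateCol {R : ℝ} (hW : IsPartialFrame (n + 1) W) {z : Fin d → ℝ}
    (hz : z ∈ frameExtensions R W (Fin.ofNat (d + 1) n)) :
    IsPartialFrame n (W.updateCol (Fin.ofNat (d + 1) n) (homogenize z)) where
  le := n.le_succ.trans hW.le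
  le_abs_det := by
    have hsub : d + 1 - n = d + 1 - (n + 1) + 1 := by have := hW.le; omega
    rw [hsub, pow_succ]
    linarith [hz.2, hW.le_abs_det]
  col_eq i hi := by
    have hne : i ≠ Fin.ofNat (d + 1) n := fun h => by rw [h, hW.val_ofNat] at hi; omega
    rw [← hW.col_eq i (hi.trans n.lt_succ_self)]
    ext r
    exact Matrix.updateCol_ne hne

lemma compl_frameExtensions_le {R : ℝ} (hW : IsPartialFrame (n + 1) W) (hR : 0 < R)
    (hRd : 16 * d ≤ R ^ 2) :
    stdGaussianPi (Fin d) (frameExtensions R W (Fin.ofNat (d + 1) n))ᶜ ≤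
      ENNReal.ofReal (1 / 8) := by
  refine stdGaussianPi_compl_frameExtensions_le hR hRd
    (abs_pos.1 (lt_of_lt_of_le (by positivity) hW.le_abs_det)) fun i hi => hW.col_eq i ?_
  rw [Fin.le_def, hW.val_ofNat] at hi
  exact Nat.lt_succ_of_le hi

end IsPartialFrame

/-- The selection process which builds a frame of sample points, in the coordinates
`x ↦ B *ᵥ x + b`, by replacing the columns of the identity matrix one by one. -/
def frameSelection (R : ℝ) (B : Matrix (Fin d) (Fin d) ℝ) (b : Fin d → ℝ) :
    SelectionProcess (Matrix (Fin (d + 1)) (Fin (d + 1)) ℝ) (Fin d → ℝ) where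
  accept n W := {x | B *ᵥ x + b ∈ frameExtensions R W (Fin.ofNat (d + 1) n)}
  step n W x := W.updateCol (Fin.ofNat (d + 1) n) (homogenize (B *ᵥ x + b))

section

variable (R : ℝ) (B : Matrix (Fin d) (Fin d) ℝ) (b : Fin d → ℝ)

lemma continuous_frameSelection_step (n : ℕ) :
    Continuous fun p : Matrix (Fin (d + 1)) (Fin (d + 1)) ℝ × (Fin d → ℝ) =>
      (frameSelection R B b).step n p.1 p.2 :=
  continuous_fst.matrix_updateCol _ (continuous_homogenize.comp (by fun_prop))

lemma isOpen_frameSelection_accept (n : ℕ) :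
    IsOpen {p : Matrix (Fin (d + 1)) (Fin (d + 1)) ℝ × (Fin d → ℝ) |
      p.2 ∈ (frameSelection R B b).accept n p.1} := by
  have hcube : IsOpen {p : Matrix (Fin (d + 1)) (Fin (d + 1)) ℝ × (Fin d → ℝ) |
      ∀ a, |(B *ᵥ p.2 + b) a| < R} := by
    rw [Set.ofPred_forall]
    exact isOpen_iInter_of_finite fun a => isOpen_lt (by fun_prop) continuous_const
  exact hcube.inter (isOpen_lt (continuous_const.mul continuous_fst.matrix_det.abs)
    (continuous_frameSelection_step R B b n).matrix_det.abs)

lemma exists_frame_of_mem_completes {N : ℕ} {S : Fin N → Fin d → ℝ}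
    (hS : S ∈ (frameSelection R B b).completes N (d + 1) 1) :
    ∃ t : Fin (d + 1) → Fin N, (∀ i a, |(B *ᵥ S (t i) + b) a| < R) ∧
      (1 / 16 : ℝ) ^ (d + 1) ≤ |(frame fun i => B *ᵥ S (t i) + b).det| := by
  obtain ⟨W, hW, hcols⟩ := (frameSelection R B b).exists_final_state_of_mem_completes
    (K := Set.range S) (J := fun n W => IsPartialFrame n W ∧ ∀ i : Fin (d + 1), n ≤ i.val →
      ∃ t, (∀ a, |(B *ᵥ S t + b) a| < R) ∧ W.col i = homogenize (B *ᵥ S t + b)) (by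
      rintro n W ⟨hW, hcols⟩ _ ⟨t, rfl⟩ haccept
      refine ⟨hW.updateCol haccept, fun i hi => ?_⟩
      by_cases h : i = Fin.ofNat (d + 1) n
      · refine ⟨t, haccept.1, ?_⟩
        ext r
        simp [frameSelection, h]
      · have hlt : n < i.val := hi.lt_of_ne fun h' => h (Fin.ext (by rw [hW.val_ofNat, h']))
        obtain ⟨t', hcube, hcol⟩ := hcols i hlt
        refine ⟨t', hcube, hcol ▸ ?_⟩
        ext r
        exact Matrix.updateCol_ne h)
    ⟨isPartialFrame_one, fun i hi => absurd i.2 hi.not_gt⟩ Set.mem_range_self hS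
  choose t hcube hcol using fun i => hcols i (Nat.zero_le _)
  refine ⟨t, hcube, ?_⟩
  have hframe : (frame fun i => B *ᵥ S (t i) + b) = W := by
    ext r i
    exact (congrFun (hcol i) r).symm
  rw [hframe]
  exact hW.le_abs_det

end

lemma measureReal_forall_notMem_framedGaussians_le {B : Matrix (Fin d) (Fin d) ℝ}
    (hB : B.det ≠ 0) (b : Fin d → ℝ) {g : Measure (Fin d → ℝ)} [IsProbabilityMeasure g] {q R D : ℝ}
    (hq₁ : q ≤ 1) (hg : ChargesHeavySets (7 / 8) q (whitenedGaussian B b) g) (hR : 0 < R)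
    (hRd : 16 * d ≤ R ^ 2) (hD : D < (1 / 16) ^ (d + 1)) (N : ℕ) :
    (Measure.pi fun _ : Fin N => g).real
      {S | ∀ t : Fin (d + 1) → Fin N, whitenedGaussian B b ∉ framedGaussians R D (S ∘ t)} ≤
        Real.exp (d + 1) * (1 - q * (1 - Real.exp (-1))) ^ N := by
  have := isProbabilityMeasure_whitenedGaussian hB b
  have haccept (n : ℕ) (W) (hW : IsPartialFrame (n + 1) W) :
      q ≤ g.real ((frameSelection R B b).accept n W) := by
    have hmeas : MeasurableSet ((frameSelection R B b).accept n W) :=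
      ((isOpen_frameSelection_accept R B b n).preimage (Continuous.prodMk_right W)).measurableSet
    have hreject : (whitenedGaussian B b).real ((frameSelection R B b).accept n W)ᶜ ≤ 1 / 8 := by
      have hle := hW.compl_frameExtensions_le hR hRd
      rw [← map_whitenedGaussian hB b] at hle
      exact ENNReal.toReal_le_of_le_ofReal (by norm_num)
        ((Measure.le_map_apply (measurable_mulVec_add B b).aemeasurable _).trans hle)
    rw [probReal_compl_eq_one_sub hmeas] at hreject
    exact hg hmeas (by linarith)
  have hfail := (frameSelection R B b).measureReal_compl_completes_le g
    (isOpen_frameSelection_accept R B b) (continuous_frameSelection_step R B b)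
    (I := IsPartialFrame) (fun n W hW x hx => hW.updateCol hx) hq₁ haccept N (d + 1) 1
    isPartialFrame_one
  rw [Nat.cast_succ] at hfail
  refine (measureReal_mono fun S hS hc => ?_).trans hfail
  obtain ⟨t, hcube, hdet⟩ := exists_frame_of_mem_completes R B b hc
  exact hS t ⟨B, b, hB, rfl, hcube, hD.trans_le hdet⟩

end FrameSelection

section Nets

lemma exists_stdSimplex_net (ι : Type*) [Fintype ι] {T : ℕ} (hT : 0 < T) :
    ∃ V ⊆ stdSimplex ℝ ι, V.Finite ∧ V.ncard ≤ (T + 1) ^ Fintype.card ι ∧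
      ∀ w ∈ stdSimplex ℝ ι, ∃ v ∈ V, ∀ i, |v i - w i| ≤ 1 / T := by
  classical
  have hT' : (0 : ℝ) < T := by exact_mod_cast hT
  obtain ⟨V, hV, hφ⟩ := Set.exists_subset_bijOn (stdSimplex ℝ ι) fun w i => ⌊T * w i⌋
  set φ : (ι → ℝ) → ι → ℤ := fun w i => ⌊T * w i⌋
  let grid : Finset (ι → ℤ) := Fintype.piFinset fun _ => Finset.Icc 0 T
  have hgrid : Set.MapsTo φ V grid := fun w hw => by
    simp only [grid, Finset.mem_coe, Fintype.mem_piFinset, Finset.mem_Icc, φ]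
    intro i
    obtain ⟨h₀, h₁⟩ := mem_Icc_of_mem_stdSimplex (hV hw) i
    exact ⟨Int.floor_nonneg.2 (by positivity), Int.floor_le_iff.2 (by push_cast; nlinarith)⟩
  refine ⟨V, hV, .of_injOn hgrid hφ.injOn grid.finite_toSet, ?_, fun w hw => ?_⟩
  · refine (Set.ncard_le_ncard_of_injOn φ hgrid hφ.injOn grid.finite_toSet).trans_eq ?_
    simp [Set.ncard_coe_finset, grid, -Fintype.coe_piFinset]
  · obtain ⟨v, hv, hvw⟩ := hφ.surjOn ⟨w, hw, rfl⟩
    refine ⟨v, hv, fun i => ?_⟩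
    have h := Int.abs_sub_lt_one_of_floor_eq_floor (congrFun hvw i)
    rw [← mul_sub, abs_mul, abs_of_pos hT'] at h
    rw [le_div_iff₀' hT']
    exact h.le

lemma exists_separated_tvDist_net {X : Type*} [MeasurableSpace X] (F : Set (Measure X)) {δ : ℝ}
    (hδ : 0 ≤ δ) : ∃ N ⊆ F, N.Pairwise (fun P Q => δ < tvDist P Q) ∧
      ∀ P ∈ F, ∃ Q ∈ N, tvDist P Q ≤ δ := by
  let U : SetRel (Measure X) (Measure X) := {p | tvDist p.1 p.2 ≤ δ}
  have : U.IsRefl := ⟨fun P => (tvDist_self P).trans_le hδ⟩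
  have : U.IsSymm := ⟨fun P Q h => (tvDist_comm Q P).trans_le h⟩
  obtain ⟨N, hN⟩ := zorn_subset {N : Set (Measure X) | N ⊆ F ∧ U.IsSeparated N}
    fun c hc hchain => ⟨⋃₀ c, ⟨Set.sUnion_subset fun s hs => (hc hs).1,
      (Set.pairwise_sUnion hchain.directedOn).2 fun s hs => (hc hs).2⟩,
      fun s => Set.subset_sUnion_of_mem⟩
  exact ⟨N, hN.prop.1, fun P hP Q hQ hPQ => not_le.1 (hN.prop.2 hP hQ hPQ),
    fun P hP => SetRel.IsCover.of_maximal_isSeparated hN hP⟩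

lemma finite_and_ncard_le_of_forall_finset {Y : Type*} {C : Set Y} {n : ℝ}
    (h : ∀ s : Finset Y, ↑s ⊆ C → (s.card : ℝ) ≤ n) : C.Finite ∧ (C.ncard : ℝ) ≤ n := by
  have hC : C.Finite := by
    by_contra hinf
    obtain ⟨s, hs, hcard⟩ := Set.Infinite.exists_subset_card_eq hinf (⌊n⌋₊ + 1)
    refine (Nat.lt_floor_add_one n).not_ge ?_
    simpa [hcard] using h s hs
  refine ⟨hC, ?_⟩
  rw [Set.ncard_eq_toFinset_card C hC]
  exact h _ hC.coe_toFinset.subset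

end Nets

section Mixtures

variable {X : Type*} [MeasurableSpace X] {ι : Type*} [Fintype ι] {w v : ι → ℝ}
  {P Q : ι → Measure X}

/-- The mixture of the measures `P i` with weights `w i`; a negative weight counts as zero. -/
noncomputable def mixture (w : ι → ℝ) (P : ι → Measure X) : Measure X :=
  ∑ i, ENNReal.ofReal (w i) • P i

lemma measureReal_mixture (hw : ∀ i, 0 ≤ w i) [∀ i, IsFiniteMeasure (P i)] (E : Set X) :
    (mixture w P).real E = ∑ i, w i * (P i).real E := by
  simp only [mixture, measureReal_def, Measure.finsetSum_apply, Measure.smul_apply, smul_eq_mul]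
  rw [ENNReal.toReal_sum fun i _ => ENNReal.mul_ne_top ENNReal.ofReal_ne_top (measure_ne_top _ _)]
  simp only [ENNReal.toReal_mul, ENNReal.toReal_ofReal (hw _)]

lemma isProbabilityMeasure_mixture (hw : w ∈ stdSimplex ℝ ι)
    (hP : ∀ i, IsProbabilityMeasure (P i)) : IsProbabilityMeasure (mixture w P) := by
  constructor
  simp only [mixture, Measure.finsetSum_apply, Measure.smul_apply, smul_eq_mul, measure_univ,
    mul_one]
  rw [← ENNReal.ofReal_sum_of_nonneg fun i _ => hw.1 i, hw.2, ENNReal.ofReal_one]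

lemma tvDist_mixture_le (hv : ∀ i, 0 ≤ v i) (hw : ∀ i, 0 ≤ w i) [∀ i, IsProbabilityMeasure (P i)]
    [∀ i, IsProbabilityMeasure (Q i)] :
    tvDist (mixture v P) (mixture w Q) ≤ ∑ i, |v i - w i| + ∑ i, w i * tvDist (P i) (Q i) := by
  refine tvDist_le fun E hE => ?_
  rw [measureReal_mixture hv, measureReal_mixture hw, ← Finset.sum_sub_distrib,
    ← Finset.sum_add_distrib]
  refine (Finset.abs_sum_le_sum_abs _ _).trans (Finset.sum_le_sum fun i _ => ?_)
  calc |v i * (P i).real E - w i * (Q i).real E|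
      = |(v i - w i) * (P i).real E + w i * ((P i).real E - (Q i).real E)| := by ring_nf
    _ ≤ |v i - w i| * (P i).real E + w i * |(P i).real E - (Q i).real E| := by
        refine (abs_add_le _ _).trans_eq ?_
        rw [abs_mul, abs_mul, abs_of_nonneg (hw i), abs_of_nonneg measureReal_nonneg]
    _ ≤ |v i - w i| + w i * tvDist (P i) (Q i) :=
        add_le_add (mul_le_of_le_one_right (abs_nonneg _) measureReal_le_one)
          (mul_le_mul_of_nonneg_left (abs_measureReal_sub_le_tvDist _ _ hE) (hw i))

-- The union of the heavy sets that `g` undercharges tells `g` from the mixture.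
lemma sum_not_chargesHeavySets_le [∀ i, IsProbabilityMeasure (P i)] {g : Measure X}
    [IsProbabilityMeasure g] (hw : w ∈ stdSimplex ℝ ι)
    [DecidablePred fun i => ChargesHeavySets (3 / 4) (w i / 4) (P i) g] :
    ∑ i with ¬ ChargesHeavySets (3 / 4) (w i / 4) (P i) g, w i ≤ 2 * tvDist g (mixture w P) := by
  set bad : Finset ι := {i | ¬ ChargesHeavySets (3 / 4) (w i / 4) (P i) g}
  have hbad : ∀ i ∈ bad, ∃ E, MeasurableSet E ∧ 3 / 4 ≤ (P i).real E ∧ g.real E < w i / 4 := by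
    intro i hi
    simpa only [ChargesHeavySets, not_forall, not_le, exists_prop] using
      (Finset.mem_filter.1 hi).2
  choose! E hE hPE hgE using hbad
  have := isProbabilityMeasure_mixture hw (P := P) inferInstance
  have htv := abs_measureReal_sub_le_tvDist g (mixture w P)
    (Finset.measurableSet_biUnion bad fun i hi => hE i hi)
  have hmix : ∑ i ∈ bad, w i * (3 / 4) ≤ (mixture w P).real (⋃ i ∈ bad, E i) := by
    rw [measureReal_mixture hw.1]
    refine le_trans (Finset.sum_le_sum fun i hi => ?_) (Finset.sum_le_univ_sum_of_nonneg
      fun i => mul_nonneg (hw.1 i) measureReal_nonneg)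
    exact mul_le_mul_of_nonneg_left ((hPE i hi).trans
      (measureReal_mono (Set.subset_biUnion_of_mem (u := E) hi) (measure_ne_top _ _))) (hw.1 i)
  have hg : g.real (⋃ i ∈ bad, E i) ≤ ∑ i ∈ bad, w i * (1 / 4) :=
    (measureReal_biUnion_finset_le bad E).trans
      (Finset.sum_le_sum fun i hi => by linarith [hgE i hi])
  rw [← Finset.sum_mul] at hmix hg
  linarith [neg_le_of_abs_le htv]

/-- All mixtures of measures in `C` with weight vectors in `V`. -/
def mixtures (V : Set (ι → ℝ)) (C : Set (Measure X)) : Set (Measure X) :=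
  Set.image2 mixture V (Set.univ.pi fun _ => C)

lemma finite_mixtures {V : Set (ι → ℝ)} (hV : V.Finite) {C : Set (Measure X)} (hC : C.Finite) :
    (mixtures V C).Finite :=
  hV.image2 _ (Set.Finite.pi fun _ => hC)

lemma ncard_mixtures_le {V : Set (ι → ℝ)} (hV : V.Finite) {C : Set (Measure X)} (hC : C.Finite) :
    (mixtures V C).ncard ≤ V.ncard * C.ncard ^ Fintype.card ι := by
  rw [mixtures, ← Set.image_uncurry_prod]
  refine (Set.ncard_image_le (hV.prod (Set.Finite.pi fun _ => hC))).trans_eq ?_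
  rw [Set.ncard_prod, Set.ncard_def (Set.univ.pi _), Set.encard_pi_eq_prod_encard,
    Finset.prod_const, Finset.card_univ, ← hC.cast_ncard_eq, ← Nat.cast_pow, ENat.toNat_natCast]

lemma isOpen_mem_mixtures {Y : Type*} [TopologicalSpace Y] (V : Set (ι → ℝ))
    {C : Y → Set (Measure X)} (hC : ∀ P, IsOpen {S | P ∈ C S}) (μ : Measure X) :
    IsOpen {S | μ ∈ mixtures V (C S)} := by
  have : {S | μ ∈ mixtures V (C S)} =
      ⋃ (v) (P) (_ : v ∈ V ∧ mixture v P = μ), ⋂ i, {S | P i ∈ C S} := by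
    ext S
    simp only [mixtures, Set.mem_image2, Set.mem_univ_pi, Set.mem_ofPred_eq, Set.mem_iUnion,
      Set.mem_iInter, exists_prop]
    grind
  rw [this]
  exact isOpen_iUnion fun v => isOpen_iUnion fun P => isOpen_iUnion fun _ =>
    isOpen_iInter_of_finite fun i => hC (P i)

lemma one_sub_le_measureReal_mem_mixtures {Y : Type*} [MeasurableSpace Y] {κ : Measure Y}
    [IsProbabilityMeasure κ] {V : Set (ι → ℝ)} {C : Y → Set (Measure X)} (hv : v ∈ V)
    (hmeas : MeasurableSet {S | mixture v P ∈ mixtures V (C S)}) {β : ℝ}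
    (hβ : ∀ i, κ.real {S | P i ∉ C S} ≤ β) :
    1 - Fintype.card ι * β ≤ κ.real {S | mixture v P ∈ mixtures V (C S)} := by
  have hsub : {S | mixture v P ∈ mixtures V (C S)}ᶜ ⊆ ⋃ i, {S | P i ∉ C S} := fun S hS => by
    by_contra hP
    simp only [Set.mem_iUnion, Set.mem_ofPred_eq, not_exists, not_not] at hP
    exact hS ⟨v, hv, P, fun i _ => hP i, rfl⟩
  have hfail := (measureReal_mono hsub).trans ((measureReal_iUnion_fintype_le _).trans
    (Finset.sum_le_card_nsmul _ _ _ fun i _ => hβ i))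
  rw [probReal_compl_eq_one_sub hmeas, nsmul_eq_mul, Finset.card_univ] at hfail
  linarith

end Mixtures

section ComponentDecoder

variable {X : Type*} [MeasurableSpace X]

lemma exists_mixture_tvDist_lt {F : Set (Measure X)} (hF : F.Nonempty) {k : ℕ} (hk : 0 < k)
    (g : Measure X) {ε : ℝ} (hε : 0 < ε) :
    ∃ (w : Fin k → ℝ) (f : Fin k → Measure X), w ∈ stdSimplex ℝ (Fin k) ∧ (∀ i, f i ∈ F) ∧
      tvDist g (mixture w f) < tvDistSet g (kmix k F) + ε := by
  obtain ⟨P, hP⟩ := hF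
  have hw := single_mem_stdSimplex ℝ (⟨0, hk⟩ : Fin k)
  have : Nonempty (kmix k F) := ⟨_, _, fun _ => P, hw.1, hw.2, fun _ => hP, rfl⟩
  obtain ⟨⟨_, w, f, hw₀, hw₁, hf, rfl⟩, hopt⟩ :=
    exists_lt_of_ciInf_lt (lt_add_of_pos_right (tvDistSet g (kmix k F)) hε)
  exact ⟨w, f, ⟨hw₀, hw₁⟩, hf, hopt⟩

lemma IsStableListDecoder.mono {F : Set (Measure X)} {C α α' ρ ρ' L L' : ℝ} {m : ℕ}
    {A : (Fin m → X) → Set (Measure X)} (hA : IsStableListDecoder F C α m ρ L A) (hα : α ≤ α')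
    (hρ : ρ' ≤ ρ) (hL : L ≤ L') : IsStableListDecoder F C α' m ρ' L' A := by
  refine ⟨fun S => ⟨(hA.1 S).1, (hA.1 S).2.1.trans hL, (hA.1 S).2.2⟩, fun g hg => ?_⟩
  obtain ⟨gt, hgt, hmeas, hprob, htv⟩ := hA.2 g hg
  exact ⟨gt, hgt, hmeas, (ENNReal.ofReal_le_ofReal hρ).trans hprob,
    htv.trans (by gcongr)⟩

lemma ChargesHeavySets.anti {p q q' : ℝ} {P g : Measure X} (h : ChargesHeavySets p q P g)
    (hq : q' ≤ q) : ChargesHeavySets p q' P g :=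
  fun _ hE hPE => hq.trans (h hE hPE)

lemma ChargesHeavySets.of_tvDist_le {p q δ : ℝ} {P Q g : Measure X} [IsProbabilityMeasure P]
    [IsProbabilityMeasure Q] (h : ChargesHeavySets p q P g) (hPQ : tvDist P Q ≤ δ) :
    ChargesHeavySets (p + δ) q Q g := fun E hE hQE =>
  h hE (by linarith [neg_le_of_abs_le (abs_measureReal_sub_le_tvDist P Q hE)])

variable [TopologicalSpace X]

/-- A list decoder, with lists of at most `L` members, that recovers a component `f ∈ F` of an
unknown mixture: for all but a proportion `β` of the samples, the list contains a fixed
`δ`-approximation of `f`. Of the sampled measure `g` it is only known that it charges the `f`-heavy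
sets. Openness of the membership events makes the decoder measurable even after mixing. -/
structure IsComponentDecoder (F : Set (Measure X)) (δ q : ℝ) (m : ℕ) (β L : ℝ)
    (C : (Fin m → X) → Set (Measure X)) : Prop where
  finite : ∀ S, (C S).Finite
  ncard_le : ∀ S, ((C S).ncard : ℝ) ≤ L
  isProbabilityMeasure : ∀ S, ∀ P ∈ C S, IsProbabilityMeasure P
  isOpen_mem : ∀ P, IsOpen {S | P ∈ C S}
  exists_stable : ∀ f ∈ F, ∃ Q : Measure X, IsProbabilityMeasure Q ∧ tvDist Q f ≤ δ ∧
    ∀ g : Measure X, IsProbabilityMeasure g → ChargesHeavySets (3 / 4) q f g →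
      (Measure.pi fun _ : Fin m => g).real {S | Q ∉ C S} ≤ β

namespace IsComponentDecoder

variable {F : Set (Measure X)} {δ q β L α : ℝ} {k m : ℕ} {C : (Fin m → X) → Set (Measure X)}

lemma insert (hC : IsComponentDecoder F δ q m β L C) (P₀ : Measure X) [IsProbabilityMeasure P₀] :
    IsComponentDecoder F δ q m β (L + 1) (fun S => insert P₀ (C S)) where
  finite S := (hC.finite S).insert P₀
  ncard_le S := (Nat.cast_le.2 (Set.ncard_insert_le P₀ (C S))).trans
    (by push_cast; linarith [hC.ncard_le S])
  isProbabilityMeasure S := by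
    rintro P (rfl | hP)
    exacts [inferInstance, hC.isProbabilityMeasure S P hP]
  isOpen_mem P := isOpen_const.union (hC.isOpen_mem P)
  exists_stable f hf := by
    obtain ⟨Q, hQ, hQf, hstable⟩ := hC.exists_stable f hf
    refine ⟨Q, hQ, hQf, fun g hg hcharge => (measureReal_mono ?_).trans (hstable g hg hcharge)⟩
    exact fun S hS hQS => hS (Set.mem_insert_of_mem _ hQS)

variable {P₀ g : Measure X} [IsProbabilityMeasure P₀] [IsProbabilityMeasure g]

open Classical in
-- The fallback `P₀` stands in for the components that the decoder cannot be expected to find.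
lemma exists_component (hC : IsComponentDecoder F δ q m β L C) (hP₀ : ∀ S, P₀ ∈ C S)
    (hβ : 0 ≤ β) {f : Measure X} (hf : f ∈ F) [IsProbabilityMeasure f] {w : ℝ} (hw : 0 ≤ w) :
    ∃ P : Measure X, IsProbabilityMeasure P ∧
      (Measure.pi fun _ : Fin m => g).real {S | P ∉ C S} ≤ β ∧
      w * tvDist P f ≤ w * δ + (if w < 4 * q then w else 0) +
        if ChargesHeavySets (3 / 4) (w / 4) f g then 0 else w := by
  obtain ⟨Q, hQ, hQf, hstable⟩ := hC.exists_stable f hf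
  by_cases hgood : ChargesHeavySets (3 / 4) (w / 4) f g ∧ 4 * q ≤ w
  · refine ⟨Q, hQ, hstable g ‹_› (hgood.1.anti (by linarith [hgood.2])), ?_⟩
    simp only [hgood.1, hgood.2.not_gt, if_true, if_false, add_zero]
    exact mul_le_mul_of_nonneg_left hQf hw
  · refine ⟨P₀, ‹_›, by simpa [hP₀] using hβ, ?_⟩
    have hwδ : 0 ≤ w * δ := mul_nonneg hw ((tvDist_nonneg _ _).trans hQf)
    have htv : w * tvDist P₀ f ≤ w := mul_le_of_le_one_right hw (tvDist_le_one P₀ f)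
    split_ifs with hlight hheavy <;> try linarith
    exact absurd ⟨‹_›, not_lt.1 hlight⟩ hgood

lemma exists_mixture (hC : IsComponentDecoder F δ q m β L C) (hP₀ : ∀ S, P₀ ∈ C S)
    (hq : 0 ≤ q) (hβ : 0 ≤ β) {ι : Type*} [Fintype ι] {f : ι → Measure X} (hf : ∀ i, f i ∈ F)
    [∀ i, IsProbabilityMeasure (f i)] {v w : ι → ℝ} (hv : v ∈ stdSimplex ℝ ι)
    (hw : w ∈ stdSimplex ℝ ι) :
    ∃ P : ι → Measure X, (∀ i, IsProbabilityMeasure (P i)) ∧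
      (∀ i, (Measure.pi fun _ : Fin m => g).real {S | P i ∉ C S} ≤ β) ∧
      tvDist (mixture v P) g ≤ ∑ i, |v i - w i| + δ + Fintype.card ι * (4 * q) +
        3 * tvDist g (mixture w f) := by
  classical
  choose P hP hPC hPf using fun i => hC.exists_component hP₀ hβ (g := g) (hf i) (hw.1 i)
  have hcomponents : ∑ i, w i * tvDist (P i) (f i) ≤
      δ + Fintype.card ι * (4 * q) + 2 * tvDist g (mixture w f) := by
    refine (Finset.sum_le_sum fun i _ => hPf i).trans ?_
    rw [Finset.sum_add_distrib, Finset.sum_add_distrib, ← Finset.sum_mul, hw.2, one_mul]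
    have hlight : ∑ i, (if w i < 4 * q then w i else 0) ≤ Fintype.card ι * (4 * q) := by
      refine (Finset.sum_le_card_nsmul _ _ (4 * q) fun i _ => ?_).trans_eq (nsmul_eq_mul _ _)
      split_ifs <;> linarith
    have hbad := sum_not_chargesHeavySets_le (g := g) (P := f) hw
    rw [Finset.sum_filter] at hbad
    simp only [ite_not] at hbad
    linarith
  have := isProbabilityMeasure_mixture hv hP
  have := isProbabilityMeasure_mixture hw (P := f) inferInstance
  have htri := tvDist_triangle (mixture v P) (mixture w f) g
  rw [tvDist_comm (mixture w f) g] at htri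
  exact ⟨P, hP, hPC, by linarith [tvDist_mixture_le hv.1 hw.1 (P := P) (Q := f)]⟩

-- Rounding the weights, the light components and the approximation of the heavy ones cost
-- `2 * α + δ` in accuracy; the remaining `α` absorbs the choice of a nearly optimal mixture.
theorem exists_isStableListDecoder_kmix [SecondCountableTopology X] [OpensMeasurableSpace X]
    (hC : IsComponentDecoder F δ (α / (4 * k)) m β L C) (hP₀ : ∀ S, P₀ ∈ C S)
    (hF : ∀ f ∈ F, IsProbabilityMeasure f) (hF' : F.Nonempty) (hk : 0 < k) (hα : 0 < α)
    (hβ : 0 ≤ β) :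
    ∃ A, IsStableListDecoder (kmix k F) 3 (3 * α + δ) m (1 - k * β)
      ((⌈k / α⌉₊ + 1) ^ k * L ^ k) A := by
  set T := ⌈k / α⌉₊
  have hT : 0 < T := Nat.ceil_pos.2 (by positivity)
  obtain ⟨V, hV, hVfin, hVcard, hVnet⟩ := exists_stdSimplex_net (Fin k) hT
  rw [Fintype.card_fin] at hVcard
  refine ⟨fun S => mixtures V (C S), fun S => ⟨finite_mixtures hVfin (hC.finite S), ?_, ?_⟩,
    fun g hg => ?_⟩
  · calc ((mixtures V (C S)).ncard : ℝ) ≤ V.ncard * (C S).ncard ^ k := by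
          exact_mod_cast (ncard_mixtures_le hVfin (hC.finite S)).trans_eq (by rw [Fintype.card_fin])
      _ ≤ (T + 1) ^ k * L ^ k := by
          gcongr
          · exact_mod_cast hVcard
          · exact hC.ncard_le S
  · rintro _ ⟨v, hv, P, hP, rfl⟩
    exact isProbabilityMeasure_mixture (hV hv) fun i => hC.isProbabilityMeasure S _ (hP i trivial)
  obtain ⟨w, f, hw, hfF, hopt⟩ := exists_mixture_tvDist_lt hF' hk g (by positivity : 0 < α / 3)
  have hf (i) : IsProbabilityMeasure (f i) := hF _ (hfF i)
  obtain ⟨v, hv, hvw⟩ := hVnet w hw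
  obtain ⟨P, hP, hPC, htv⟩ := hC.exists_mixture hP₀ (g := g) (by positivity) hβ hfF (hV hv) hw
  have hmeas := (isOpen_mem_mixtures V hC.isOpen_mem (mixture v P)).measurableSet
  have := isProbabilityMeasure_mixture (hV hv) hP
  refine ⟨mixture v P, this, hmeas, ENNReal.ofReal_le_of_le_toReal ?_, ?_⟩
  · exact (one_sub_le_measureReal_mem_mixtures hv hmeas hPC).trans_eq' (by rw [Fintype.card_fin])
  · have hround : ∑ i, |v i - w i| ≤ α := by
      refine (Finset.sum_le_card_nsmul _ _ _ fun i _ => hvw i).trans ?_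
      rw [Finset.card_univ, Fintype.card_fin, nsmul_eq_mul, mul_one_div]
      exact div_le_of_le_mul₀ (by positivity) hα.le ((div_le_iff₀' hα).1 (Nat.le_ceil _))
    have hlight : (Fintype.card (Fin k) : ℝ) * (4 * (α / (4 * k))) = α := by
      rw [Fintype.card_fin]
      field_simp
    linarith

end IsComponentDecoder

end ComponentDecoder

section GaussianDecoder

variable {d : ℕ}

lemma isOpen_mem_framedGaussians (R D : ℝ) (P : Measure (Fin d → ℝ)) :
    IsOpen {y : Fin (d + 1) → Fin d → ℝ | P ∈ framedGaussians R D y} := by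
  simp only [framedGaussians, Set.mem_ofPred_eq]
  simp only [Set.ofPred_exists]
  refine isOpen_iUnion fun B => isOpen_iUnion fun b => ?_
  have hcont (i : Fin (d + 1)) : Continuous fun y : Fin (d + 1) → Fin d → ℝ => B *ᵥ y i + b := by
    fun_prop
  refine isOpen_const.and (isOpen_const.and (IsOpen.and ?_ ?_))
  · simp only [Set.ofPred_forall]
    exact isOpen_iInter_of_finite fun i => isOpen_iInter_of_finite fun a =>
      isOpen_lt ((continuous_apply a).comp (hcont i)).abs continuous_const
  · refine isOpen_lt continuous_const (Continuous.matrix_det ?_).abs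
    refine continuous_pi fun r => continuous_pi fun i => ?_
    exact (continuous_apply r).comp (continuous_homogenize.comp (hcont i))

/-- The members of `N` that are framed by `d + 1` of the sample points. -/
def framedCandidates (N : Set (Measure (Fin d → ℝ))) (R D : ℝ) {m : ℕ} (S : Fin m → Fin d → ℝ) :
    Set (Measure (Fin d → ℝ)) :=
  ⋃ t : Fin (d + 1) → Fin m, N ∩ framedGaussians R D (S ∘ t)

lemma isOpen_mem_framedCandidates (N : Set (Measure (Fin d → ℝ))) (R D : ℝ) {m : ℕ}
    (P : Measure (Fin d → ℝ)) :
    IsOpen {S : Fin m → Fin d → ℝ | P ∈ framedCandidates N R D S} := by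
  simp only [framedCandidates, Set.mem_iUnion, Set.ofPred_exists]
  exact isOpen_iUnion fun t => isOpen_const.and
    ((isOpen_mem_framedGaussians R D P).preimage (by fun_prop : Continuous fun S => S ∘ t))

lemma finite_and_ncard_framedCandidates_le {N : Set (Measure (Fin d → ℝ))} {R D n : ℝ}
    (hN : ∀ y, ∀ s : Finset (Measure (Fin d → ℝ)), ↑s ⊆ N ∩ framedGaussians R D y → s.card ≤ n)
    {m : ℕ} (S : Fin m → Fin d → ℝ) :
    (framedCandidates N R D S).Finite ∧
      ((framedCandidates N R D S).ncard : ℝ) ≤ m ^ (d + 1) * n := by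
  have h (t : Fin (d + 1) → Fin m) := finite_and_ncard_le_of_forall_finset (hN (S ∘ t))
  refine ⟨Set.finite_iUnion fun t => (h t).1, (Nat.cast_le.2
    (Set.ncard_iUnion_le_of_fintype _)).trans ?_⟩
  rw [Nat.cast_sum]
  refine (Finset.sum_le_card_nsmul _ _ _ fun t _ => (h t).2).trans_eq ?_
  simp

lemma card_le_of_separated_of_subset_framedGaussians [NeZero d] {δ : ℝ} (hδ : 0 < δ)
    (hδ' : δ ≤ 1 / 8) {y : Fin (d + 1) → Fin d → ℝ} {s : Finset (Measure (Fin d → ℝ))}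
    (hs : ↑s ⊆ framedGaussians (4 * d) ((1 / 32) ^ (d + 1)) y)
    (hsep : ∀ P ∈ s, ∀ Q ∈ s, P ≠ Q → δ < tvDist P Q) :
    (s.card : ℝ) ≤ (2 ^ 15 * d ^ 3 / δ) ^ (d * (d + 1)) := by
  have hd : (1 : ℝ) ≤ d := by exact_mod_cast NeZero.one_le
  set ε : ℝ := δ / (128 * d ^ 2)
  have hε : d ^ 2 * ε = δ / 128 := by
    simp only [ε]
    field_simp
  refine (card_le_of_subset_framedGaussians (ε := ε) (by positivity) (by linarith) (by linarith)
    (by norm_num) hs fun P hP Q hQ hPQ => ?_).trans_eq ?_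
  · linarith [hsep P hP Q hQ hPQ]
  · congr 1
    simp only [ε]
    field_simp
    norm_num

theorem exists_isComponentDecoder_Gd [NeZero d] {δ q : ℝ} (hδ : 0 < δ) (hδ' : δ ≤ 1 / 8)
    (hq : q ≤ 1) (m : ℕ) :
    ∃ C, IsComponentDecoder (Gd d) δ q m (Real.exp (d + 1) * (1 - q * (1 - Real.exp (-1))) ^ m)
      (m ^ (d + 1) * (2 ^ 15 * d ^ 3 / δ) ^ (d * (d + 1))) C := by
  have hd : (1 : ℝ) ≤ d := by exact_mod_cast NeZero.one_le
  obtain ⟨N, hNF, hsep, hnet⟩ := exists_separated_tvDist_net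
    {P : Measure (Fin d → ℝ) | ∃ B b, B.det ≠ 0 ∧ P = whitenedGaussian B b} hδ.le
  have hpack (y) (s : Finset (Measure (Fin d → ℝ)))
      (hs : ↑s ⊆ N ∩ framedGaussians (4 * d) ((1 / 32) ^ (d + 1)) y) :=
    card_le_of_separated_of_subset_framedGaussians hδ hδ' (hs.trans Set.inter_subset_right)
      fun P hP Q hQ => hsep (hs hP).1 (hs hQ).1
  refine ⟨framedCandidates N (4 * d) ((1 / 32) ^ (d + 1)), fun S => ?_, fun S => ?_, ?_, ?_, ?_⟩
  · exact (finite_and_ncard_framedCandidates_le hpack S).1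
  · exact (finite_and_ncard_framedCandidates_le hpack S).2
  · intro S P hP
    obtain ⟨t, -, ht⟩ := Set.mem_iUnion.1 hP
    exact isProbabilityMeasure_of_mem_framedGaussians ht
  · exact isOpen_mem_framedCandidates N _ _
  intro f hf
  have hfF := exists_eq_whitenedGaussian hf
  obtain ⟨Q, hQN, hfQ⟩ := hnet f hfF
  obtain ⟨A, a, hA, rfl⟩ := hfF
  obtain ⟨B, b, hB, rfl⟩ := hNF hQN
  have := isProbabilityMeasure_whitenedGaussian hA a
  have := isProbabilityMeasure_whitenedGaussian hB b
  refine ⟨_, this, (tvDist_comm _ _).trans_le hfQ, fun g hg hcharge => ?_⟩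
  have hcharge' : ChargesHeavySets (7 / 8) q (whitenedGaussian B b) g := by
    convert hcharge.of_tvDist_le (hfQ.trans hδ') using 1
    norm_num
  refine (measureReal_mono ?_).trans (measureReal_forall_notMem_framedGaussians_le hB b hq hcharge'
    (R := 4 * d) (D := (1 / 32) ^ (d + 1)) (by positivity) (by nlinarith) (by gcongr; norm_num) m)
  exact fun S hS t ht => hS (Set.mem_iUnion.2 ⟨t, hQN, ht⟩)

end GaussianDecoder

lemma Gd_nonempty (d : ℕ) : (Gd d).Nonempty :=
  ⟨_, 0, 1, PosDef.one, rfl⟩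

lemma isProbabilityMeasure_of_mem_Gd {d : ℕ} {P : Measure (Fin d → ℝ)} (hP : P ∈ Gd d) :
    IsProbabilityMeasure P := by
  obtain ⟨B, b, hB, rfl⟩ := exists_eq_whitenedGaussian hP
  exact isProbabilityMeasure_whitenedGaussian hB b

theorem exists_isStableListDecoder_kmix_Gd {d k : ℕ} [NeZero d] (hk : 1 ≤ k) {α β : ℝ}
    (hα₀ : 0 < α) (hα₁ : α < 1) {m : ℕ}
    (hβ : Real.exp (d + 1) * (1 - α / (4 * k) * (1 - Real.exp (-1))) ^ m ≤ β) :
    ∃ A, IsStableListDecoder (kmix k (Gd d)) 3 (3 * α + α / 8) m (1 - k * β)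
      ((⌈k / α⌉₊ + 1) ^ k * (m ^ (d + 1) * (2 ^ 18 * d ^ 3 / α) ^ (d * (d + 1)) + 1) ^ k) A := by
  have hk' : (1 : ℝ) ≤ k := by exact_mod_cast hk
  have hq : α / (4 * k) ≤ 1 := (div_le_one (by positivity)).2 (by linarith)
  obtain ⟨P₀, hP₀⟩ := Gd_nonempty d
  have := isProbabilityMeasure_of_mem_Gd hP₀
  obtain ⟨C, hC⟩ := exists_isComponentDecoder_Gd (d := d) (δ := α / 8) (by positivity)
    (by linarith) hq m
  obtain ⟨A, hA⟩ := (hC.insert P₀).exists_isStableListDecoder_kmix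
    (fun S => Set.mem_insert _ _) (fun f => isProbabilityMeasure_of_mem_Gd) ⟨P₀, hP₀⟩ hk hα₀
    (mul_nonneg (Real.exp_pos _).le (pow_nonneg (one_sub_mul_one_sub_exp_neg_one_nonneg hq) _))
  refine ⟨A, hA.mono le_rfl (by gcongr) (le_of_eq ?_)⟩
  rw [show (2 : ℝ) ^ 15 * d ^ 3 / (α / 8) = 2 ^ 18 * d ^ 3 / α by ring]

section Numerics

variable {d k m m₁ : ℕ} {α ℓ : ℝ}

lemma exp_mul_one_sub_mul_pow_le {q : ℝ} (hq₀ : 0 ≤ q) (hq₁ : q ≤ 1) (a : ℝ) (n : ℕ) :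
    Real.exp a * (1 - q * (1 - Real.exp (-1))) ^ n ≤ Real.exp (a - q * n / 2) := by
  have hbase : 1 - q * (1 - Real.exp (-1)) ≤ Real.exp (-(q / 2)) := by
    have hexp : Real.exp (-1) < 1 / 2 := Real.exp_neg_one_lt_half
    nlinarith [Real.add_one_le_exp (-(q / 2))]
  calc Real.exp a * (1 - q * (1 - Real.exp (-1))) ^ n
      ≤ Real.exp a * Real.exp (-(q / 2)) ^ n := by
        gcongr
        exact one_sub_mul_one_sub_exp_neg_one_nonneg hq₁
    _ = Real.exp (a - q * n / 2) := by
        rw [← Real.exp_nat_mul, ← Real.exp_add]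
        ring_nf

lemma failureProb_le (hk : 1 ≤ k) (hα₀ : 0 < α) (hα₁ : α < 1) (hm : 4 * (d + 1) ≤ m)
    (hm₁ : (2 * m * k + 8 * k * ℓ) / α ≤ m₁) :
    Real.exp (d + 1) * (1 - α / (4 * k) * (1 - Real.exp (-1))) ^ m₁ ≤ Real.exp (-ℓ) := by
  have hk' : (1 : ℝ) ≤ k := by exact_mod_cast hk
  have hm' : 4 * ((d : ℝ) + 1) ≤ m := by exact_mod_cast hm
  have hrate : (m : ℝ) / 2 + 2 * ℓ ≤ α / (4 * k) * m₁ := by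
    calc (m : ℝ) / 2 + 2 * ℓ = α / (4 * k) * ((2 * m * k + 8 * k * ℓ) / α) := by
          field_simp
          ring
      _ ≤ α / (4 * k) * m₁ := by gcongr
  refine (exp_mul_one_sub_mul_pow_le (by positivity) ?_ _ _).trans (Real.exp_le_exp.2 ?_)
  · rw [div_le_one (by positivity)]
    linarith
  · linarith

lemma sampleSize_le (hd : 1 ≤ d) (hk : 1 ≤ k) (hα₀ : 0 < α) (hα₁ : α < 1) (hℓ : 1 ≤ ℓ)
    (hm : m ≤ 100 * d * ℓ + 1) :
    (⌈(2 * m * k + 8 * k * ℓ) / α⌉₊ : ℝ) ≤ 500 * d * (k * ℓ / α) := by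
  have hd' : (1 : ℝ) ≤ d := by exact_mod_cast hd
  have hk' : (1 : ℝ) ≤ k := by exact_mod_cast hk
  have hkℓ : (k : ℝ) ≤ k * ℓ := le_mul_of_one_le_right (by positivity) hℓ
  have hdkℓ : k * ℓ ≤ d * (k * ℓ) := le_mul_of_one_le_left (by positivity) hd'
  have hmk : m * k ≤ (100 * d * ℓ + 1) * k := by gcongr
  have hone : 1 ≤ d * (k * ℓ) := by nlinarith
  calc (⌈(2 * m * k + 8 * k * ℓ) / α⌉₊ : ℝ) ≤ (2 * m * k + 8 * k * ℓ) / α + 1 :=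
        (Nat.ceil_lt_add_one (by positivity)).le
    _ = (2 * (m * k) + 8 * (k * ℓ) + α) / α := by
        field_simp
    _ ≤ 500 * (d * (k * ℓ)) / α := by
        gcongr
        linarith [hone]
    _ = 500 * d * (k * ℓ / α) := by ring

lemma pow_le_rpow_two_mul_mul_log {x D : ℝ} (hx : 2 ≤ x) (hD : 1 ≤ D) (n : ℕ) :
    D ^ n ≤ x ^ (2 * n * Real.log D) := by
  have hlogD := Real.log_nonneg hD
  have hlogx : 1 / 2 ≤ Real.log x := by
    linarith [Real.log_two_gt_d9, Real.log_le_log (by norm_num) hx]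
  rw [← Real.rpow_natCast, Real.rpow_def_of_pos (by linarith), Real.rpow_def_of_pos (by linarith)]
  refine Real.exp_le_exp.2 ?_
  calc Real.log D * n = 1 / 2 * (2 * n * Real.log D) := by ring
    _ ≤ Real.log x * (2 * n * Real.log D) := by gcongr

lemma six_mul_sq_le_pow {Y : ℝ} (hY : 1 ≤ Y) : 6 * (500 * Y) ^ 2 ≤ (27 * Y) ^ 100 :=
  calc 6 * (500 * Y) ^ 2 = 6 * 500 ^ 2 * Y ^ 2 := by ring
    _ ≤ 27 ^ 100 * Y ^ 100 := by gcongr <;> norm_num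
    _ = (27 * Y) ^ 100 := by ring

lemma listFactor_one_le {Y : ℝ} (hα₀ : 0 < α) (hα₁ : α < 1) (hY : 1 / α ≤ Y) :
    6 * (500 * Y) ^ 2 * (2 ^ 18 / α) ^ 2 ≤ (27 * Y) ^ 100 := by
  have hY₁ : 1 ≤ Y := (one_le_one_div hα₀ hα₁.le).trans hY
  calc 6 * (500 * Y) ^ 2 * (2 ^ 18 / α) ^ 2 = 6 * 500 ^ 2 * 2 ^ 36 * (Y ^ 2 * (1 / α) ^ 2) := by
        ring
    _ ≤ 27 ^ 100 * (Y ^ 2 * Y ^ 2) := by gcongr; norm_num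
    _ = 27 ^ 100 * Y ^ 4 := by ring
    _ ≤ 27 ^ 100 * Y ^ 100 := by gcongr; norm_num
    _ = (27 * Y) ^ 100 := by ring

lemma listFactor_le_of_two_le {Y : ℝ} (hd : 2 ≤ d) (hα₀ : 0 < α) (hα₁ : α < 1) (hY : 1 ≤ Y) :
    6 * (500 * d * Y) ^ (2 * d) * (2 ^ 18 * d ^ 3 / α) ^ (2 * d ^ 2) ≤
      (d / α) ^ (50 * d ^ 2) * (27 * Y) ^ (100 * d) := by
  have hd' : (2 : ℝ) ≤ d := by exact_mod_cast hd
  set D : ℝ := d / α with hD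
  have hdD : (d : ℝ) ≤ D := le_div_self (by positivity) hα₀ hα₁.le
  have hD₂ : 2 ≤ D := hd'.trans hdD
  have hY_factor : 6 * (500 * Y) ^ (2 * d) ≤ (27 * Y) ^ (100 * d) := by
    calc 6 * (500 * Y) ^ (2 * d) ≤ 6 ^ d * (500 * Y) ^ (2 * d) := by
          gcongr
          exact le_self_pow₀ (by norm_num) (by omega)
      _ = (6 * (500 * Y) ^ 2) ^ d := by rw [mul_pow 6, ← pow_mul]
      _ ≤ ((27 * Y) ^ 100) ^ d := by
          gcongr
          exact six_mul_sq_le_pow hY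
      _ = (27 * Y) ^ (100 * d) := (pow_mul _ _ _).symm
  have hbase : 2 ^ 18 * d ^ 3 / α ≤ D ^ 21 := by
    calc 2 ^ 18 * d ^ 3 / α = 2 ^ 18 * d ^ 2 * D := by rw [hD]; ring
      _ ≤ D ^ 18 * D ^ 2 * D := by gcongr
      _ = D ^ 21 := by ring
  have hD_factor : (d : ℝ) ^ (2 * d) * (2 ^ 18 * d ^ 3 / α) ^ (2 * d ^ 2) ≤ D ^ (50 * d ^ 2) := by
    calc (d : ℝ) ^ (2 * d) * (2 ^ 18 * d ^ 3 / α) ^ (2 * d ^ 2)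
        ≤ D ^ (2 * d) * (D ^ 21) ^ (2 * d ^ 2) := by gcongr
      _ = D ^ (2 * d + 21 * (2 * d ^ 2)) := by rw [← pow_mul, ← pow_add]
      _ ≤ D ^ (50 * d ^ 2) := pow_le_pow_right₀ (by linarith) (by nlinarith)
  calc 6 * (500 * d * Y) ^ (2 * d) * (2 ^ 18 * d ^ 3 / α) ^ (2 * d ^ 2)
      = d ^ (2 * d) * (2 ^ 18 * d ^ 3 / α) ^ (2 * d ^ 2) * (6 * (500 * Y) ^ (2 * d)) := by
        rw [mul_right_comm 500, mul_pow (500 * Y)]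
        ring
    _ ≤ D ^ (50 * d ^ 2) * (27 * Y) ^ (100 * d) := by gcongr

lemma listFactor_le {Y L : ℝ} (hd : 1 ≤ d) (hα₀ : 0 < α) (hα₁ : α < 1) (hℓ : 1 ≤ ℓ)
    (hY : 1 / α ≤ Y) (hm : 100 * d ≤ m)
    (hL : (d * ℓ) ^ (100 * (d : ℝ) ^ 2 * Real.log (d / α)) ≤ L) :
    6 * (500 * d * Y) ^ (2 * d) * (2 ^ 18 * d ^ 3 / α) ^ (2 * d ^ 2) ≤ L * (27 * Y) ^ m := by
  have hd' : (1 : ℝ) ≤ d := by exact_mod_cast hd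
  have hY₁ : 1 ≤ Y := (one_le_one_div hα₀ hα₁.le).trans hY
  have hD : 1 ≤ d / α := hd'.trans (le_div_self (by positivity) hα₀ hα₁.le)
  have hlogD := Real.log_nonneg hD
  rcases hd.eq_or_lt with rfl | hd₂
  · have hL₁ : 1 ≤ L := (Real.one_le_rpow (by simpa using hℓ) (by positivity)).trans hL
    calc 6 * (500 * (1 : ℕ) * Y) ^ (2 * 1) * (2 ^ 18 * (1 : ℕ) ^ 3 / α) ^ (2 * 1 ^ 2)
        = 6 * (500 * Y) ^ 2 * (2 ^ 18 / α) ^ 2 := by norm_num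
      _ ≤ (27 * Y) ^ 100 := listFactor_one_le hα₀ hα₁ hY
      _ ≤ (27 * Y) ^ m := pow_le_pow_right₀ (by linarith) hm
      _ ≤ L * (27 * Y) ^ m := le_mul_of_one_le_left (by positivity) hL₁
  · have hd₂' : (2 : ℝ) ≤ d := by exact_mod_cast hd₂
    have hLD : (d / α) ^ (50 * d ^ 2) ≤ L := by
      refine (pow_le_rpow_two_mul_mul_log (by nlinarith : 2 ≤ d * ℓ) hD _).trans (hL.trans_eq' ?_)
      push_cast
      ring_nf
    calc _ ≤ _ := listFactor_le_of_two_le hd₂ hα₀ hα₁ hY₁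
      _ ≤ L * (27 * Y) ^ m := by
        gcongr
        · exact (by positivity : (0 : ℝ) ≤ (d / α) ^ (50 * d ^ 2)).trans hLD
        · linarith

lemma candidateCount_add_one_le {x : ℝ} (hd : 1 ≤ d) (hα₀ : 0 < α) (hα₁ : α < 1) (hx : 1 ≤ x)
    (hm₁ : m₁ ≤ x) :
    m₁ ^ (d + 1) * (2 ^ 18 * d ^ 3 / α) ^ (d * (d + 1)) + 1 ≤
      2 * (x ^ (2 * d) * (2 ^ 18 * d ^ 3 / α) ^ (2 * d ^ 2)) := by
  have hd' : (1 : ℝ) ≤ d := by exact_mod_cast hd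
  set z := 2 ^ 18 * d ^ 3 / α with hz
  have hz₁ : 1 ≤ z := by
    rw [hz, le_div_iff₀ hα₀]
    linarith [one_le_pow₀ hd' (n := 3)]
  have hle : m₁ ^ (d + 1) * z ^ (d * (d + 1)) ≤ x ^ (2 * d) * z ^ (2 * d ^ 2) :=
    calc m₁ ^ (d + 1) * z ^ (d * (d + 1)) ≤ x ^ (d + 1) * z ^ (d * (d + 1)) := by gcongr
      _ ≤ x ^ (2 * d) * z ^ (2 * d ^ 2) := by
        gcongr ?_ * ?_
        · exact pow_le_pow_right₀ hx (by omega)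
        · exact pow_le_pow_right₀ hz₁ (by nlinarith)
  linarith [one_le_mul_of_one_le_of_one_le (one_le_pow₀ hx (n := 2 * d))
    (one_le_pow₀ hz₁ (n := 2 * d ^ 2))]

lemma listSize_le {L : ℝ} (hd : 1 ≤ d) (hk : 1 ≤ k) (hα₀ : 0 < α) (hα₁ : α < 1) (hℓ : 1 ≤ ℓ)
    (hm : 100 * d ≤ m) (hm₁ : m₁ ≤ 500 * d * (k * ℓ / α))
    (hL : (d * ℓ) ^ (100 * (d : ℝ) ^ 2 * Real.log (d / α)) ≤ L) :
    (⌈(k : ℝ) / α⌉₊ + 1 : ℝ) ^ k * (m₁ ^ (d + 1) * (2 ^ 18 * d ^ 3 / α) ^ (d * (d + 1)) + 1) ^ k ≤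
      (L * k / α) ^ k * (10 * Real.exp 1 * k * ℓ / α) ^ (m * k) := by
  have hd' : (1 : ℝ) ≤ d := by exact_mod_cast hd
  have hk' : (1 : ℝ) ≤ k := by exact_mod_cast hk
  set Y := k * ℓ / α with hY
  have hYα : 1 / α ≤ Y := by
    rw [hY]
    gcongr
    nlinarith
  have hY₁ : 1 ≤ Y := (one_le_one_div hα₀ hα₁.le).trans hYα
  have hsample : 1 ≤ 500 * d * Y := by nlinarith
  have hT : (⌈k / α⌉₊ : ℝ) + 1 ≤ 3 * (k / α) := by
    have := (Nat.ceil_lt_add_one (by positivity : 0 ≤ (k : ℝ) / α)).le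
    linarith [hk'.trans (le_div_self (by positivity) hα₀ hα₁.le)]
  have hbase : 27 * Y ≤ 10 * Real.exp 1 * k * ℓ / α := by
    calc 27 * Y ≤ 10 * Real.exp 1 * Y := by
          gcongr
          linarith [Real.exp_one_gt_d9]
      _ = _ := by rw [hY]; ring
  have hL₀ : 0 ≤ L := (Real.rpow_nonneg (by positivity) _).trans hL
  rw [← mul_pow, pow_mul _ m, ← mul_pow]
  gcongr ?_ ^ k
  calc (⌈(k : ℝ) / α⌉₊ + 1 : ℝ) * (m₁ ^ (d + 1) * (2 ^ 18 * d ^ 3 / α) ^ (d * (d + 1)) + 1)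
      ≤ 3 * (k / α) *
          (2 * ((500 * d * Y) ^ (2 * d) * (2 ^ 18 * d ^ 3 / α) ^ (2 * d ^ 2))) := by
        gcongr ?_ * ?_
        exact candidateCount_add_one_le hd hα₀ hα₁ hsample hm₁
    _ = k / α * (6 * (500 * d * Y) ^ (2 * d) * (2 ^ 18 * d ^ 3 / α) ^ (2 * d ^ 2)) := by ring
    _ ≤ k / α * (L * (27 * Y) ^ m) := by
        gcongr k / α * ?_
        exact listFactor_le hd hα₀ hα₁ hℓ hYα hm hL
    _ ≤ k / α * (L * (10 * Real.exp 1 * k * ℓ / α) ^ m) := by gcongr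
    _ = L * k / α * (10 * Real.exp 1 * k * ℓ / α) ^ m := by ring

end Numerics

theorem statement3 :
    ∃ c : ℝ, 0 < c ∧ ∀ d k : ℕ, 1 ≤ d → 1 ≤ k → ∀ α β : ℝ, α ∈ Set.Ioo (0 : ℝ) 1 →
      β ∈ Set.Ioc (0 : ℝ) (Real.exp 1)⁻¹ →
      ∀ m L : ℕ, m = ⌈c * d * Real.log (1 / β)⌉₊ →
        L = ⌈((d : ℝ) * Real.log (1 / β)) ^ (c * (d : ℝ) ^ 2 * Real.log (d / α))⌉₊ →
        ∀ m₁ : ℕ, m₁ = ⌈(2 * (m : ℝ) * k + 8 * k * Real.log (1 / β)) / α⌉₊ →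
        ∀ L₁ : ℝ, L₁ = ((L : ℝ) * k / α) ^ k *
            (10 * Real.exp 1 * k * Real.log (1 / β) / α) ^ (m * k) →
        ∃ A₁ : (Fin m₁ → (Fin d → ℝ)) → Set (Measure (Fin d → ℝ)),
          IsStableListDecoder (kmix k (Gd d)) 3 (5 * α) m₁ (1 - 2 * k * β) L₁ A₁ := by
  refine ⟨100, by norm_num, ?_⟩
  rintro d k hd hk α β ⟨hα₀, hα₁⟩ ⟨hβ₀, hβ₁⟩ m L hm rfl m₁ rfl L₁ rfl
  have : NeZero d := ⟨by omega⟩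
  have hβ : Real.exp (-Real.log (1 / β)) = β := by
    rw [one_div, Real.log_inv, neg_neg, Real.exp_log hβ₀]
  set ℓ := Real.log (1 / β)
  have hℓ : 1 ≤ ℓ := by
    rwa [← hβ, ← Real.exp_neg, Real.exp_le_exp, neg_le_neg_iff] at hβ₁
  have hm_lower : 100 * d ≤ m := by
    rw [hm, ← Nat.cast_le (α := ℝ)]
    push_cast
    exact (le_mul_of_one_le_right (by positivity) hℓ).trans (Nat.le_ceil _)
  have hm_upper : m ≤ 100 * d * ℓ + 1 := hm ▸ (Nat.ceil_lt_add_one (by positivity)).le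
  have hfail := hβ ▸ failureProb_le hk hα₀ hα₁ (ℓ := ℓ) (by omega : 4 * (d + 1) ≤ m)
    (Nat.le_ceil _)
  obtain ⟨A, hA⟩ := exists_isStableListDecoder_kmix_Gd hk hα₀ hα₁ hfail
  have hkβ : 0 ≤ k * β := by positivity
  exact ⟨A, hA.mono (by linarith) (by linarith) (listSize_le hd hk hα₀ hα₁ hℓ hm_lower
    (sampleSize_le hd hk hα₀ hα₁ hℓ hm_upper) (Nat.le_ceil _))⟩
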